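/- Let k be a field and A a finite-dimensional k-algebra such that A/rad(A) is a separable k-algebra. If the outer automorphism group Out(A) = Aut_k(A)/Inn(A) is finite, then the trivial extension algebra T(A) is periodic if and only if it is twisted periodic. -/

import Mathlib

open TensorProduct

/-- There is an exact sequence `0 → M → P_n → ⋯ → P_1 → N → 0` of `R`-modules
(so with `n` middle terms) in which each middle term `P_i` is projective. -/
def HasProjExactSeq (R : Type) [Ring R] (M N : ModuleCat R) (n : ℕ) : Prop :=
  ∃ (P : ℕ → ModuleCat R) (d : ∀ i, P (i + 1) →ₗ[R] P i)
    (_ : (P 0 : Type) ≃ₗ[R] N) (_ : (M : Type) ≃ₗ[R] P (n + 1)),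
    (∀ i, 1 ≤ i → i ≤ n → Module.Projective R (P i)) ∧
    Function.Surjective (d 0) ∧ Function.Injective (d n) ∧
    ∀ i < n, LinearMap.range (d (i + 1)) = LinearMap.ker (d i)

/-- The regular bimodule `B` as a module over the enveloping algebra `B ⊗[k] Bᵐᵒᵖ`. -/
noncomputable def regularBimodule (k B : Type) [Field k] [Ring B] [Algebra k B] :
    ModuleCat (B ⊗[k] Bᵐᵒᵖ) :=
  letI : Module (B ⊗[k] Bᵐᵒᵖ) B := TensorProduct.Algebra.module
  ModuleCat.of _ B

/-- The twisted bimodule `₁B_φ` (underlying set `B`, right action twisted by `φ`,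
i.e. `a • x • b = a * x * φ b`) as a module over the enveloping algebra `B ⊗[k] Bᵐᵒᵖ`. -/
noncomputable def twistedBimodule (k B : Type) [Field k] [Ring B] [Algebra k B]
    (φ : B ≃ₐ[k] B) : ModuleCat (B ⊗[k] Bᵐᵒᵖ) :=
  letI : Module (B ⊗[k] Bᵐᵒᵖ) B := TensorProduct.Algebra.module
  letI : Module (B ⊗[k] Bᵐᵒᵖ) B :=
    Module.compHom B
      (Algebra.TensorProduct.map (AlgHom.id k B) (AlgEquiv.op φ).toAlgHom).toRingHom
  ModuleCat.of _ B

/-- A finite-dimensional `k`-algebra `B` is periodic if there are `n ≥ 1` and an exact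
sequence `0 → B → P_{n-1} → ⋯ → P_0 → B → 0` of `B`-`B`-bimodules (modules over the
enveloping algebra `B ⊗[k] Bᵐᵒᵖ`) with all `P_i` projective. -/
noncomputable def IsPeriodicAlgebra (k B : Type) [Field k] [Ring B] [Algebra k B] : Prop :=
  ∃ n : ℕ, 1 ≤ n ∧ HasProjExactSeq (B ⊗[k] Bᵐᵒᵖ) (regularBimodule k B) (regularBimodule k B) n

/-- A finite-dimensional `k`-algebra `B` is twisted periodic if there are `n ≥ 1`, an algebra
automorphism `φ` of `B`, and an exact sequence `0 → ₁B_φ → P_{n-1} → ⋯ → P_0 → B → 0` of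
bimodules with all `P_i` projective over `B ⊗[k] Bᵐᵒᵖ`. -/
noncomputable def IsTwistedPeriodicAlgebra (k B : Type) [Field k] [Ring B] [Algebra k B] : Prop :=
  ∃ (n : ℕ) (φ : B ≃ₐ[k] B), 1 ≤ n ∧
    HasProjExactSeq (B ⊗[k] Bᵐᵒᵖ) (twistedBimodule k B φ) (regularBimodule k B) n

section DualBimodule

variable (k A : Type) [Field k] [Ring A] [Algebra k A]

/-- The left `A`-action on `D(A) = Hom_k(A, k)`, given by `(a • f) x = f (x * a)`. -/
noncomputable instance Module.Dual.leftModule : Module A (Module.Dual k A) where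
  smul a f := f ∘ₗ LinearMap.mulRight k a
  one_smul f := LinearMap.ext fun x => by show f (x * 1) = f x; rw [mul_one]
  mul_smul a b f := LinearMap.ext fun x => by
    show f (x * (a * b)) = f (x * a * b); rw [mul_assoc]
  smul_zero a := LinearMap.ext fun x => by show (0 : Module.Dual k A) (x * a) = 0; rfl
  smul_add a f g := LinearMap.ext fun x => by
    show (f + g) (x * a) = f (x * a) + g (x * a); rfl
  add_smul a b f := LinearMap.ext fun x => by
    show f (x * (a + b)) = f (x * a) + f (x * b); rw [mul_add, map_add]
  zero_smul f := LinearMap.ext fun x => by show f (x * 0) = 0; rw [mul_zero, map_zero]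

/-- The right `A`-action on `D(A) = Hom_k(A, k)`, given by `(f • op b) x = f (b * x)`. -/
noncomputable instance Module.Dual.rightModule : Module Aᵐᵒᵖ (Module.Dual k A) where
  smul b f := f ∘ₗ LinearMap.mulLeft k b.unop
  one_smul f := LinearMap.ext fun x => by show f (1 * x) = f x; rw [one_mul]
  mul_smul a b f := LinearMap.ext fun x => by
    show f ((a * b).unop * x) = f (b.unop * (a.unop * x))
    rw [MulOpposite.unop_mul, mul_assoc]
  smul_zero a := LinearMap.ext fun x => by show (0 : Module.Dual k A) (a.unop * x) = 0; rfl
  smul_add a f g := LinearMap.ext fun x => by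
    show (f + g) (a.unop * x) = f (a.unop * x) + g (a.unop * x); rfl
  add_smul a b f := LinearMap.ext fun x => by
    show f ((a + b).unop * x) = f (a.unop * x) + f (b.unop * x)
    rw [MulOpposite.unop_add, add_mul, map_add]
  zero_smul f := LinearMap.ext fun x => by
    show f ((0 : Aᵐᵒᵖ).unop * x) = 0
    rw [MulOpposite.unop_zero, zero_mul, map_zero]

instance : SMulCommClass A Aᵐᵒᵖ (Module.Dual k A) where
  smul_comm a b f := LinearMap.ext fun x => by
    show f (b.unop * (x * a)) = f (b.unop * x * a); rw [mul_assoc]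

instance : IsScalarTower k A (Module.Dual k A) where
  smul_assoc c a f := LinearMap.ext fun x => by
    show f (x * (c • a)) = c • f (x * a)
    rw [mul_smul_comm, map_smul]

instance : IsScalarTower k Aᵐᵒᵖ (Module.Dual k A) where
  smul_assoc c b f := LinearMap.ext fun x => by
    show f ((c • b).unop * x) = c • f (b.unop * x)
    rw [MulOpposite.unop_smul, smul_mul_assoc, map_smul]

/-- The trivial extension algebra `T(A) = A ⊕ D(A)`. -/
noncomputable abbrev TrivialExtension : Type := TrivSqZeroExt A (Module.Dual k A)


end DualBimodule

/-!
A twisted period of an algebra `T` is an isomorphism between the twist of the bimodule `T` by an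
automorphism `φ` and an `n`-th syzygy of `T`. Splicing allows `φ` to be replaced by its powers, and
composing with isomorphisms of twists allows it to be changed by inner automorphisms. For
`T = T(A)` these two moves suffice to make `φ` trivial.

The projection `δ` onto `D(A)` is a derivation of `T`. It acts on `T` by a connection, connections
pass to syzygies, and the connection so obtained on the twist of `T` yields `w` with
`[w, φ b] = δ (φ b) - φ (δ b)`. Modulo the radical the elements `φ ^ i w` are central roots of one
polynomial, which gives a power of `φ` that is homogeneous after conjugation by a unipotent
element. As `Out(A)` is finite, a further power fixes `A` up to an inner automorphism; it then acts
on `D(A)` as multiplication by a central unit `c` of `A`.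

Tensoring the bimodule sequence with left modules turns it into a natural family of semilinear maps
`Ωⁿ N → N`, commuting with `Ω` up to sign and up to maps factoring through projectives. Take for `N`
the module `A = T / D(A)` and follow an element of `Ωⁿ A` over `1` killed by `D(A)`: its components
for the internal grading, which lives in degrees at most `n`, are scaled by powers `c ^ d`, and
this forces `c ^ (2 * n!) = 1`.
-/

universe u

namespace PeriodicAlgebra

section Semilinear

/-- A left module over a `k`-algebra `T`. The `k`-structure is part of the data, so that
`T ⊗[k] M` carries its own `k`-structure and not the one restricted from `T`. -/
structure AlgModule (k T : Type u) [Field k] [Ring T] [Algebra k T] where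
  carrier : Type u
  [addCommGroup : AddCommGroup carrier]
  [moduleBase : Module k carrier]
  [module : Module T carrier]
  [isScalarTower : IsScalarTower k T carrier]

attribute [instance] AlgModule.addCommGroup AlgModule.moduleBase AlgModule.module
  AlgModule.isScalarTower

variable {k T : Type u} [Field k] [Ring T] [Algebra k T]

instance : CoeSort (AlgModule k T) (Type u) := ⟨AlgModule.carrier⟩

instance (M : AlgModule k T) : SMulCommClass k T M := IsScalarTower.to_smulCommClass

/-- Semilinearity of a `k`-linear map along an algebra endomorphism `σ` of `T`. -/
def IsSemilinear (σ : T →ₐ[k] T) {M N : AlgModule k T} (f : M →ₗ[k] N) : Prop :=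
  ∀ (t : T) (x : M), f (t • x) = σ t • f x

/-- `T`-linearity of a `k`-linear map, as the special case `σ = id` of semilinearity. -/
abbrev IsAlgLinear {M N : AlgModule k T} (f : M →ₗ[k] N) : Prop :=
  IsSemilinear (AlgHom.id k T) f

variable {M N L : AlgModule k T} {σ τ : T →ₐ[k] T}

theorem IsAlgLinear.id : IsAlgLinear (LinearMap.id : M →ₗ[k] M) := fun _ _ => rfl

theorem isAlgLinear_restrictScalars (f : M →ₗ[T] N) : IsAlgLinear (f.restrictScalars k) :=
  f.map_smul

namespace IsSemilinear

theorem comp {g : N →ₗ[k] L} {f : M →ₗ[k] N} (hg : IsSemilinear τ g) (hf : IsSemilinear σ f) :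
    IsSemilinear (τ.comp σ) (g ∘ₗ f) := fun t x => by
  simp only [LinearMap.comp_apply, hf t x, hg _ _, AlgHom.comp_apply]

theorem smul {f : M →ₗ[k] N} (hf : IsSemilinear σ f) (u : k) : IsSemilinear σ (u • f) :=
  fun t x => by simp only [LinearMap.smul_apply, hf t x, smul_comm u]

theorem sub {f g : M →ₗ[k] N} (hf : IsSemilinear σ f) (hg : IsSemilinear σ g) :
    IsSemilinear σ (f - g) := fun t x => by
  simp only [LinearMap.sub_apply, hf t x, hg t x, smul_sub]

/-- The bundled `T`-linear map underlying an `IsAlgLinear` one. -/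
def toLinearMap {f : M →ₗ[k] N} (hf : IsAlgLinear f) : M →ₗ[T] N :=
  { f with map_smul' := hf }

end IsSemilinear

end Semilinear

section FreeCover

variable {k T : Type u} [Field k] [Ring T] [Algebra k T]

/-- The free `T`-module `T ⊗[k] M` covering `M`. -/
def FreeCover (M : AlgModule k T) : AlgModule k T where
  carrier := T ⊗[k] M

variable {M N L : AlgModule k T}

namespace FreeCover

instance : Module.Projective T (FreeCover M) :=
  inferInstanceAs (Module.Projective T (T ⊗[k] M))

/-- The pure tensors `t ⊗ x` of the free cover. -/
def tmul (M : AlgModule k T) : T →ₗ[k] M →ₗ[k] FreeCover M := TensorProduct.mk k T M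

theorem hom_ext {f g : FreeCover M →ₗ[k] N} (h : ∀ t x, f (tmul M t x) = g (tmul M t x)) :
    f = g := TensorProduct.ext' h

@[elab_as_elim]
protected theorem induction_on {p : FreeCover M → Prop} (b : FreeCover M) (zero : p 0)
    (tmul : ∀ t x, p (tmul M t x)) (add : ∀ a b, p a → p b → p (a + b)) : p b :=
  TensorProduct.induction_on b zero tmul add

protected theorem smul_tmul (s t : T) (x : M) : s • tmul M t x = tmul M (s * t) x :=
  TensorProduct.smul_tmul' s t x

/-- The multiplication map `T ⊗[k] M → M`. -/
def ev (M : AlgModule k T) : FreeCover M →ₗ[k] M :=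
  TensorProduct.lift (Algebra.lsmul k k M).toLinearMap

@[simp]
theorem ev_tmul (t : T) (x : M) : ev M (tmul M t x) = t • x := rfl

theorem isAlgLinear_ev (M : AlgModule k T) : IsAlgLinear (ev M) := fun t b => by
  induction b using FreeCover.induction_on with
  | zero => simp
  | tmul s x => rw [FreeCover.smul_tmul, ev_tmul, ev_tmul, mul_smul, AlgHom.id_apply]
  | add a b ha hb => rw [smul_add, map_add, map_add, ha, hb, smul_add]

/-- The map `σ ⊗ f` of free covers. -/
def map (σ : T →ₗ[k] T) (f : M →ₗ[k] N) : FreeCover M →ₗ[k] FreeCover N :=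
  TensorProduct.map σ f

@[simp]
protected theorem map_tmul (σ : T →ₗ[k] T) (f : M →ₗ[k] N) (t : T) (x : M) :
    map σ f (tmul M t x) = tmul N (σ t) (f x) := rfl

protected theorem map_comp (σ τ : T →ₗ[k] T) (g : N →ₗ[k] L) (f : M →ₗ[k] N) :
    map (τ ∘ₗ σ) (g ∘ₗ f) = map τ g ∘ₗ map σ f := hom_ext fun t x => by simp

protected theorem map_map (σ τ : T →ₗ[k] T) (g : N →ₗ[k] L) (f : M →ₗ[k] N) (b : FreeCover M) :
    map τ g (map σ f b) = map (τ ∘ₗ σ) (g ∘ₗ f) b :=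
  (LinearMap.congr_fun (FreeCover.map_comp σ τ g f) b).symm

protected theorem map_sub (σ : T →ₗ[k] T) (f g : M →ₗ[k] N) : map σ (f - g) = map σ f - map σ g :=
  hom_ext fun t x => by simp

protected theorem map_smul (σ : T →ₗ[k] T) (u : k) (f : M →ₗ[k] N) : map σ (u • f) = u • map σ f :=
  hom_ext fun t x => by simp

protected theorem map_id : map LinearMap.id (LinearMap.id : M →ₗ[k] M) = LinearMap.id :=
  hom_ext fun t x => by simp

theorem isSemilinear_map (σ : T →ₐ[k] T) (f : M →ₗ[k] N) :
    IsSemilinear σ (map σ.toLinearMap f) := fun t b => by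
  induction b using FreeCover.induction_on with
  | zero => simp
  | tmul s x => simp [FreeCover.smul_tmul]
  | add a b ha hb => rw [smul_add, map_add, map_add, ha, hb, smul_add]

theorem ev_map {σ : T →ₐ[k] T} {f : M →ₗ[k] N} (hf : IsSemilinear σ f) (b : FreeCover M) :
    ev N (map σ.toLinearMap f b) = f (ev M b) := by
  induction b using FreeCover.induction_on with
  | zero => simp
  | tmul s x => simp [hf s x]
  | add a b ha hb => simp only [map_add, ha, hb]

end FreeCover

open FreeCover

/-- The syzygy `Ω M = ker (T ⊗[k] M → M)`, strictly functorial in `M`. -/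
def Syzygy (M : AlgModule k T) : AlgModule k T where
  carrier := LinearMap.ker (isAlgLinear_ev M).toLinearMap

namespace Syzygy

/-- The inclusion `Ω M → T ⊗[k] M`. -/
def incl (M : AlgModule k T) : Syzygy M →ₗ[k] FreeCover M :=
  (LinearMap.ker (isAlgLinear_ev M).toLinearMap).subtype.restrictScalars k

theorem isAlgLinear_incl (M : AlgModule k T) : IsAlgLinear (incl M) :=
  isAlgLinear_restrictScalars (M := Syzygy M) (N := FreeCover M) _

theorem incl_smul (t : T) (x : Syzygy M) : incl M (t • x) = t • incl M x :=
  isAlgLinear_incl M t x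

theorem incl_injective (M : AlgModule k T) : Function.Injective (incl M) :=
  Subtype.val_injective

@[simp]
theorem ev_incl (x : Syzygy M) : ev M (incl M x) = 0 := x.2

/-- The `k`-linear projection `b ↦ b - 1 ⊗ ev b` onto the syzygy. -/
def proj (M : AlgModule k T) : FreeCover M →ₗ[k] Syzygy M :=
  LinearMap.codRestrict ((LinearMap.ker (isAlgLinear_ev M).toLinearMap).restrictScalars k)
    (LinearMap.id - tmul M 1 ∘ₗ ev M) fun b => by
      change ev M (b - tmul M 1 (ev M b)) = 0
      simp

theorem incl_proj (b : FreeCover M) : incl M (proj M b) = b - tmul M 1 (ev M b) := rfl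

theorem incl_proj_of_ev_eq_zero {b : FreeCover M} (h : ev M b = 0) :
    incl M (proj M b) = b := by
  rw [incl_proj, h, map_zero, sub_zero]

@[simp]
theorem proj_incl (x : Syzygy M) : proj M (incl M x) = x :=
  incl_injective M (incl_proj_of_ev_eq_zero (ev_incl x))

instance projective (Q : AlgModule k T) [Module.Projective T Q] :
    Module.Projective T (Syzygy Q) := by
  obtain ⟨s, hs⟩ := Module.projective_lifting_property (isAlgLinear_ev Q).toLinearMap
    (LinearMap.id : Q →ₗ[T] Q) (fun x => ⟨tmul Q 1 x, (ev_tmul 1 x).trans (one_smul T x)⟩)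
  let r : FreeCover Q →ₗ[T] Syzygy Q :=
    LinearMap.codRestrict (LinearMap.ker (isAlgLinear_ev Q).toLinearMap)
      (LinearMap.id - s ∘ₗ (isAlgLinear_ev Q).toLinearMap) fun b => by
        rw [LinearMap.mem_ker, LinearMap.sub_apply, map_sub, sub_eq_zero]
        exact (LinearMap.congr_fun hs _).symm
  refine Module.Projective.of_split (isAlgLinear_incl Q).toLinearMap r
    (LinearMap.ext fun x => incl_injective Q ?_)
  change incl Q x - s (ev Q (incl Q x)) = incl Q x
  rw [ev_incl, map_zero, sub_zero]

end Syzygy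

attribute [irreducible] FreeCover FreeCover.tmul FreeCover.ev FreeCover.map Syzygy Syzygy.incl
  Syzygy.proj

namespace Syzygy

/-- The action of `Ω` on maps; the result is a restriction of `σ ⊗ f` when `f` is
`σ`-semilinear, and a junk value otherwise. -/
def map (σ : T →ₐ[k] T) (f : M →ₗ[k] N) : Syzygy M →ₗ[k] Syzygy N :=
  proj N ∘ₗ FreeCover.map σ.toLinearMap f ∘ₗ incl M

variable {σ τ : T →ₐ[k] T}

theorem incl_map {f : M →ₗ[k] N} (hf : IsSemilinear σ f) (x : Syzygy M) :
    incl N (map σ f x) = FreeCover.map σ.toLinearMap f (incl M x) :=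
  incl_proj_of_ev_eq_zero (by rw [LinearMap.comp_apply, ev_map hf, ev_incl, map_zero])

theorem isSemilinear_map {f : M →ₗ[k] N} (hf : IsSemilinear σ f) : IsSemilinear σ (map σ f) :=
  fun t x => incl_injective N (by
    rw [incl_map hf, incl_smul, FreeCover.isSemilinear_map, incl_smul, incl_map hf])

theorem map_comp {f : M →ₗ[k] N} (hf : IsSemilinear σ f) (g : N →ₗ[k] L) :
    map (τ.comp σ) (g ∘ₗ f) = map τ g ∘ₗ map σ f := LinearMap.ext fun x => by
  change proj L (FreeCover.map _ _ (incl M x)) = proj L (FreeCover.map _ g (incl N (map _ f x)))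
  rw [incl_map hf, FreeCover.map_map]
  rfl

theorem map_sub (f g : M →ₗ[k] N) : map σ (f - g) = map σ f - map σ g :=
  LinearMap.ext fun x => by simp [map, FreeCover.map_sub]

theorem map_smul (u : k) (f : M →ₗ[k] N) : map σ (u • f) = u • map σ f :=
  LinearMap.ext fun x => by simp [map, FreeCover.map_smul]

theorem map_id : map (AlgHom.id k T) (LinearMap.id : M →ₗ[k] M) = LinearMap.id :=
  LinearMap.ext fun x => by simp [map, FreeCover.map_id]

end Syzygy

/-- The iterated syzygy `Ωⁿ M`. -/
abbrev iterSyzygy : ℕ → AlgModule k T → AlgModule k T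
  | 0, M => M
  | n + 1, M => Syzygy (iterSyzygy n M)

namespace iterSyzygy

/-- The action of `Ωⁿ` on maps. -/
def map (σ : T →ₐ[k] T) (f : M →ₗ[k] N) : ∀ n : ℕ, iterSyzygy n M →ₗ[k] iterSyzygy n N
  | 0 => f
  | n + 1 => Syzygy.map σ (map σ f n)

variable {σ τ : T →ₐ[k] T}

theorem map_succ (f : M →ₗ[k] N) (n : ℕ) : map σ f (n + 1) = Syzygy.map σ (map σ f n) := rfl

theorem isSemilinear_map {f : M →ₗ[k] N} (hf : IsSemilinear σ f) :
    ∀ n, IsSemilinear σ (map σ f n)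
  | 0 => hf
  | n + 1 => Syzygy.isSemilinear_map (isSemilinear_map hf n)

theorem map_comp {f : M →ₗ[k] N} (hf : IsSemilinear σ f) (g : N →ₗ[k] L) :
    ∀ n, map (τ.comp σ) (g ∘ₗ f) n = map τ g n ∘ₗ map σ f n
  | 0 => rfl
  | n + 1 => by
    rw [map_succ, map_succ, map_succ, map_comp hf g n, Syzygy.map_comp (isSemilinear_map hf n)]

theorem map_id : ∀ n, map (AlgHom.id k T) (LinearMap.id : M →ₗ[k] M) n = LinearMap.id
  | 0 => rfl
  | n + 1 => by
    rw [map_succ, map_id n]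
    exact Syzygy.map_id

instance projective (Q : AlgModule k T) [h : Module.Projective T Q] :
    ∀ n, Module.Projective T (iterSyzygy n Q)
  | 0 => h
  | n + 1 => have := projective Q n; Syzygy.projective (iterSyzygy n Q)

end iterSyzygy

end FreeCover

section StablyZero

variable {k T : Type u} [Field k] [Ring T] [Algebra k T]

/-- A `σ`-semilinear map is stably zero if it factors as a linear map into a projective module
followed by a `σ`-semilinear map. -/
def IsStablyZero (σ : T →ₐ[k] T) {M N : AlgModule k T} (a : M →ₗ[k] N) : Prop :=
  ∃ (Q : AlgModule k T) (r : M →ₗ[k] Q) (s : Q →ₗ[k] N),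
    Module.Projective T Q ∧ IsAlgLinear r ∧ IsSemilinear σ s ∧ a = s ∘ₗ r

namespace IsStablyZero

variable {M N L : AlgModule k T} {σ τ : T →ₐ[k] T}

theorem add {a b : M →ₗ[k] N} (ha : IsStablyZero σ a) (hb : IsStablyZero σ b) :
    IsStablyZero σ (a + b) := by
  obtain ⟨Q, r, s, hQ, hr, hs, rfl⟩ := ha
  obtain ⟨Q', r', s', hQ', hr', hs', rfl⟩ := hb
  refine ⟨{ carrier := Q × Q' }, r.prod r', s.coprod s',
    inferInstanceAs (Module.Projective T (Q × Q')), fun t x => Prod.ext (hr t x) (hr' t x), ?_,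
    rfl⟩
  rintro t ⟨x, y⟩
  change s (t • x) + s' (t • y) = σ t • (s x + s' y)
  rw [hs, hs', smul_add]

theorem smul {a : M →ₗ[k] N} (ha : IsStablyZero σ a) (u : k) : IsStablyZero σ (u • a) := by
  obtain ⟨Q, r, s, hQ, hr, hs, rfl⟩ := ha
  exact ⟨Q, r, u • s, hQ, hr, hs.smul u, rfl⟩

theorem zero : IsStablyZero σ (0 : M →ₗ[k] N) :=
  ⟨FreeCover M, 0, 0, inferInstance, fun _ _ => by simp, fun _ _ => by simp, rfl⟩

theorem comp_linear {a : N →ₗ[k] L} (ha : IsStablyZero σ a) {f : M →ₗ[k] N}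
    (hf : IsAlgLinear f) : IsStablyZero σ (a ∘ₗ f) := by
  obtain ⟨Q, r, s, hQ, hr, hs, rfl⟩ := ha
  exact ⟨Q, r ∘ₗ f, s, hQ, hr.comp hf, hs, rfl⟩

theorem semilinear_comp {a : M →ₗ[k] N} (ha : IsStablyZero σ a) {f : N →ₗ[k] L}
    (hf : IsSemilinear τ f) : IsStablyZero (τ.comp σ) (f ∘ₗ a) := by
  obtain ⟨Q, r, s, hQ, hr, hs, rfl⟩ := ha
  exact ⟨Q, r, f ∘ₗ s, hQ, hr, hf.comp hs, rfl⟩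

theorem syzygy_map {a : M →ₗ[k] N} (ha : IsStablyZero σ a) :
    IsStablyZero σ (Syzygy.map σ a) := by
  obtain ⟨Q, r, s, hQ, hr, hs, rfl⟩ := ha
  exact ⟨Syzygy Q, Syzygy.map (AlgHom.id k T) r, Syzygy.map σ s, Syzygy.projective Q,
    Syzygy.isSemilinear_map hr, Syzygy.isSemilinear_map hs, Syzygy.map_comp hr s⟩

end IsStablyZero

end StablyZero

section Cast

variable {k T : Type u} [Field k] [Ring T] [Algebra k T] {M N L : AlgModule k T}

/-- Transport along an equality of modules, such as `Ωⁿ (Ω N) = Ω (Ωⁿ N)`. -/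
def castLinear (h : M = N) : M →ₗ[k] N := h ▸ LinearMap.id

theorem isAlgLinear_castLinear (h : M = N) : IsAlgLinear (castLinear h) := by
  subst h
  exact IsAlgLinear.id

theorem castLinear_self (h : M = M) : castLinear h = LinearMap.id := rfl

theorem castLinear_comp_castLinear (h : M = N) (h' : N = L) :
    castLinear h' ∘ₗ castLinear h = castLinear (h.trans h') := by
  subst h h'
  rfl

theorem Syzygy.map_comp_castLinear (σ : T →ₐ[k] T) (f : N →ₗ[k] L) (h : M = N) :
    Syzygy.map σ (f ∘ₗ castLinear h) = Syzygy.map σ f ∘ₗ castLinear (congrArg Syzygy h) := by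
  subst h
  rfl

theorem iterSyzygy_syzygy (N : AlgModule k T) :
    ∀ n, iterSyzygy n (Syzygy N) = Syzygy (iterSyzygy n N)
  | 0 => rfl
  | n + 1 => congrArg Syzygy (iterSyzygy_syzygy N n)

theorem iterSyzygy_comm (N : AlgModule k T) (n : ℕ) :
    ∀ m, iterSyzygy n (iterSyzygy m N) = iterSyzygy m (iterSyzygy n N)
  | 0 => rfl
  | m + 1 => (iterSyzygy_syzygy _ n).trans (congrArg Syzygy (iterSyzygy_comm N n m))

end Cast

section Swap

variable {k T : Type u} [Field k] [Ring T] [Algebra k T]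

open FreeCover

theorem Syzygy.incl_ev_map_proj {M : AlgModule k T} (b : FreeCover (FreeCover M)) :
    incl M (ev (Syzygy M) (FreeCover.map LinearMap.id (proj M) b)) =
      ev (FreeCover M) b - FreeCover.map LinearMap.id (ev M) b := by
  induction b using FreeCover.induction_on with
  | zero => simp
  | tmul t y =>
    rw [FreeCover.map_tmul, ev_tmul, incl_smul, incl_proj, FreeCover.map_tmul, ev_tmul, smul_sub]
    simp [FreeCover.smul_tmul]
  | add a b ha hb =>
    simp only [map_add, ha, hb]
    abel

/-- The natural map `Ω (T ⊗ M) → T ⊗ Ω M` over `Ω M`. The sign makes it compatible with the two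
multiplication maps and anti-compatible with the two inclusions of `Ω (Ω M)`. -/
noncomputable def Syzygy.swap (M : AlgModule k T) :
    Syzygy (FreeCover M) →ₗ[k] FreeCover (Syzygy M) :=
  (-1 : k) • (FreeCover.map (AlgHom.id k T).toLinearMap (proj M) ∘ₗ incl (FreeCover M))

theorem Syzygy.isAlgLinear_swap (M : AlgModule k T) : IsAlgLinear (swap M) :=
  ((FreeCover.isSemilinear_map _ (proj M)).comp (isAlgLinear_incl (FreeCover M))).smul (-1)

theorem Syzygy.ev_comp_swap (M : AlgModule k T) :
    ev (Syzygy M) ∘ₗ swap M = map (AlgHom.id k T) (ev M) := by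
  refine LinearMap.ext fun x => incl_injective M ?_
  rw [incl_map (isAlgLinear_ev M)]
  simp [swap, incl_ev_map_proj]

theorem Syzygy.swap_comp_map_incl (M : AlgModule k T) :
    swap M ∘ₗ map (AlgHom.id k T) (incl M) = (-1 : k) • incl (Syzygy M) := by
  have proj_comp_incl : proj M ∘ₗ incl M = LinearMap.id := LinearMap.ext proj_incl
  refine LinearMap.ext fun x => ?_
  simp [swap, incl_map (isAlgLinear_incl M), FreeCover.map_map, proj_comp_incl, FreeCover.map_id]

namespace iterSyzygy

/-- The natural map `Ωⁿ (T ⊗ N) → T ⊗ Ωⁿ N` obtained by iterating `Syzygy.swap`. -/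
noncomputable def swap (N : AlgModule k T) :
    ∀ n : ℕ, iterSyzygy n (FreeCover N) →ₗ[k] FreeCover (iterSyzygy n N)
  | 0 => LinearMap.id
  | n + 1 => Syzygy.swap (iterSyzygy n N) ∘ₗ Syzygy.map (AlgHom.id k T) (swap N n)

theorem swap_succ (N : AlgModule k T) (n : ℕ) : swap N (n + 1) =
    Syzygy.swap (iterSyzygy n N) ∘ₗ Syzygy.map (AlgHom.id k T) (swap N n) := rfl

theorem isAlgLinear_swap (N : AlgModule k T) : ∀ n, IsAlgLinear (swap N n)
  | 0 => IsAlgLinear.id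
  | n + 1 => (Syzygy.isAlgLinear_swap _).comp (Syzygy.isSemilinear_map (isAlgLinear_swap N n))

theorem ev_comp_swap (N : AlgModule k T) :
    ∀ n, ev (iterSyzygy n N) ∘ₗ swap N n = map (AlgHom.id k T) (ev N) n
  | 0 => rfl
  | n + 1 => by
    rw [swap_succ, ← LinearMap.comp_assoc, Syzygy.ev_comp_swap,
      ← Syzygy.map_comp (isAlgLinear_swap N n), ev_comp_swap N n]
    rfl

theorem swap_comp_map_incl (N : AlgModule k T) :
    ∀ n, swap N n ∘ₗ map (AlgHom.id k T) (Syzygy.incl N) n =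
      (-1 : k) ^ n • (Syzygy.incl (iterSyzygy n N) ∘ₗ castLinear (iterSyzygy_syzygy N n))
  | 0 => by
    rw [pow_zero, one_smul]
    rfl
  | n + 1 => by
    rw [swap_succ, map_succ, LinearMap.comp_assoc,
      ← Syzygy.map_comp (isSemilinear_map (Syzygy.isAlgLinear_incl N) n), swap_comp_map_incl N n,
      Syzygy.map_smul, LinearMap.comp_smul, Syzygy.map_comp_castLinear, ← LinearMap.comp_assoc,
      AlgHom.comp_id, Syzygy.swap_comp_map_incl, LinearMap.smul_comp, smul_smul, pow_succ]

end iterSyzygy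

end Swap

section SyzygyTransformation

variable {k T : Type u} [Field k] [Ring T] [Algebra k T]

open FreeCover

/-- A natural family of `σ`-semilinear maps `Ωⁿ N → N`. -/
structure SyzygyTransformation (σ : T →ₐ[k] T) (n : ℕ) where
  app : ∀ N : AlgModule k T, iterSyzygy n N →ₗ[k] N
  isSemilinear_app : ∀ N, IsSemilinear σ (app N)
  naturality : ∀ {M N : AlgModule k T} {f : M →ₗ[k] N}, IsAlgLinear f →
    f ∘ₗ app M = app N ∘ₗ iterSyzygy.map (AlgHom.id k T) f n

namespace SyzygyTransformation

variable {σ : T →ₐ[k] T} {n : ℕ} (η : SyzygyTransformation σ n) (N : AlgModule k T)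

theorem ev_app_freeCover (x : iterSyzygy n (FreeCover N)) :
    ev N (η.app (FreeCover N) x) =
      ev N (FreeCover.map σ.toLinearMap (η.app N) (iterSyzygy.swap N n x)) := by
  have naturality_ev := LinearMap.congr_fun (η.naturality (isAlgLinear_ev N)) x
  have ev_swap := LinearMap.congr_fun (iterSyzygy.ev_comp_swap N n) x
  simp only [LinearMap.comp_apply] at naturality_ev ev_swap
  rw [naturality_ev, ev_map (η.isSemilinear_app N), ev_swap]

/- Both maps extend along `Ωⁿ (Ω N) → Ωⁿ (T ⊗ N)`, and the difference of the extensions has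
image in `Ω N`; the source `Ωⁿ (T ⊗ N)` is projective. -/
theorem isStablyZero_app_syzygy_sub (N : AlgModule k T) :
    IsStablyZero σ (η.app (Syzygy N) -
      (-1 : k) ^ n • (Syzygy.map σ (η.app N) ∘ₗ castLinear (iterSyzygy_syzygy N n))) := by
  let δ : iterSyzygy n (FreeCover N) →ₗ[k] FreeCover N :=
    η.app (FreeCover N) - FreeCover.map σ.toLinearMap (η.app N) ∘ₗ iterSyzygy.swap N n
  have isSemilinear_δ : IsSemilinear σ δ := (η.isSemilinear_app _).sub
    ((FreeCover.isSemilinear_map σ _).comp (iterSyzygy.isAlgLinear_swap N n))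
  have incl_proj_δ (x) : Syzygy.incl N (Syzygy.proj N (δ x)) = δ x :=
    Syzygy.incl_proj_of_ev_eq_zero (by
      rw [LinearMap.sub_apply, map_sub, sub_eq_zero]
      exact η.ev_app_freeCover N x)
  refine ⟨iterSyzygy n (FreeCover N), iterSyzygy.map (AlgHom.id k T) (Syzygy.incl N) n,
    Syzygy.proj N ∘ₗ δ, inferInstance,
    iterSyzygy.isSemilinear_map (Syzygy.isAlgLinear_incl N) n, fun t x => ?_,
    LinearMap.ext fun x => Syzygy.incl_injective N ?_⟩
  · refine Syzygy.incl_injective N ?_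
    rw [Syzygy.incl_smul, LinearMap.comp_apply, incl_proj_δ, isSemilinear_δ,
      LinearMap.comp_apply, incl_proj_δ]
  · have naturality_incl := LinearMap.congr_fun (η.naturality (Syzygy.isAlgLinear_incl N)) x
    have swap_incl := LinearMap.congr_fun (iterSyzygy.swap_comp_map_incl N n) x
    simp only [LinearMap.comp_apply, LinearMap.smul_apply] at naturality_incl swap_incl
    rw [LinearMap.comp_apply, LinearMap.comp_apply, incl_proj_δ]
    simp only [δ, LinearMap.sub_apply, LinearMap.comp_apply, map_sub, LinearMap.smul_apply,
      map_smul, naturality_incl, swap_incl, Syzygy.incl_map (η.isSemilinear_app N)]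

theorem isStablyZero_app_iterSyzygy_sub (m : ℕ) :
    IsStablyZero σ (η.app (iterSyzygy m N) - ((-1 : k) ^ n) ^ m •
      (iterSyzygy.map σ (η.app N) m ∘ₗ castLinear (iterSyzygy_comm N n m))) := by
  induction m with
  | zero =>
    rw [pow_zero, one_smul]
    exact (sub_self (η.app N)).symm ▸ IsStablyZero.zero
  | succ m ih =>
    have step := ((ih.syzygy_map.comp_linear
      (isAlgLinear_castLinear (iterSyzygy_syzygy _ n))).smul ((-1 : k) ^ n))
    convert (η.isStablyZero_app_syzygy_sub (iterSyzygy m N)).add step using 1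
    rw [Syzygy.map_sub, Syzygy.map_smul, Syzygy.map_comp_castLinear, LinearMap.sub_comp,
      LinearMap.smul_comp, LinearMap.comp_assoc, castLinear_comp_castLinear, smul_sub, smul_smul,
      pow_succ']
    exact (sub_add_sub_cancel _ _ _).symm

variable {N}

theorem isStablyZero_app_sub_app_comp_map (hlin : IsAlgLinear (η.app N))
    {i : N →ₗ[k] iterSyzygy n N} (hi : IsAlgLinear i) (hsection : η.app N ∘ₗ i = LinearMap.id) :
    IsStablyZero σ (η.app N -
      ((-1 : k) ^ n) ^ n • (η.app N ∘ₗ iterSyzygy.map σ (LinearMap.id : N →ₗ[k] N) n)) := by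
  have map_section : iterSyzygy.map (AlgHom.id k T) (η.app N) n ∘ₗ
      iterSyzygy.map (AlgHom.id k T) i n = LinearMap.id := by
    rw [← iterSyzygy.map_comp hi, hsection]
    exact iterSyzygy.map_id n
  have map_section_σ : iterSyzygy.map σ (η.app N) n ∘ₗ iterSyzygy.map (AlgHom.id k T) i n =
      iterSyzygy.map σ LinearMap.id n := by
    rw [← iterSyzygy.map_comp hi, hsection]
    rfl
  have comparison := ((η.isStablyZero_app_iterSyzygy_sub N n).semilinear_comp hlin).comp_linear
    (iterSyzygy.isSemilinear_map hi n)
  rwa [castLinear_self, LinearMap.comp_id, LinearMap.comp_sub, LinearMap.sub_comp,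
    η.naturality hlin, LinearMap.comp_assoc, map_section, LinearMap.comp_id, LinearMap.comp_smul,
    LinearMap.smul_comp, LinearMap.comp_assoc, map_section_σ, AlgHom.id_comp] at comparison

end SyzygyTransformation

end SyzygyTransformation

section SquareZeroGrading

/-- A grading of `T` in degrees `0` and `1`, encoded by the projection `degOne` onto the degree
one part (which is then a derivation). The last field says that the right annihilator of the
degree one part is contained in it; it holds for the trivial extension because `D(A)` is
faithful. -/
structure SquareZeroGrading (k T : Type u) [Field k] [Ring T] [Algebra k T] where
  degOne : T →ₗ[k] T
  degOne_degOne : ∀ t, degOne (degOne t) = degOne t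
  degOne_mul : ∀ s t, degOne (s * t) = degOne s * t + s * degOne t
  degOne_mul_degOne : ∀ s t, degOne s * degOne t = 0
  degOne_eq_self_of_annihilated : ∀ t, (∀ s, degOne s * t = 0) → degOne t = t

namespace SquareZeroGrading

variable {k T : Type u} [Field k] [Ring T] [Algebra k T] (G : SquareZeroGrading k T)

/-- The projection onto the degree zero part. -/
def degZero : T →ₗ[k] T := LinearMap.id - G.degOne

theorem degZero_apply (t : T) : G.degZero t = t - G.degOne t := rfl

theorem degZero_mul (s t : T) : G.degZero (s * t) = G.degZero s * G.degZero t := by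
  simp only [degZero_apply, G.degOne_mul, sub_mul, mul_sub, G.degOne_mul_degOne]
  abel

theorem degZero_degZero (t : T) : G.degZero (G.degZero t) = G.degZero t := by
  simp [degZero_apply, G.degOne_degOne]

theorem degZero_degOne (t : T) : G.degZero (G.degOne t) = 0 := by
  simp [degZero_apply, G.degOne_degOne]

theorem degOne_degZero (t : T) : G.degOne (G.degZero t) = 0 := by
  simp [degZero_apply, G.degOne_degOne]

theorem degZero_add_degOne (t : T) : G.degZero t + G.degOne t = t := sub_add_cancel _ _

theorem degOne_mul_eq (s t : T) :
    G.degOne (s * t) = G.degZero s * G.degOne t + G.degOne s * G.degZero t := by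
  simp only [degZero_apply, G.degOne_mul, sub_mul, mul_sub, G.degOne_mul_degOne]
  abel

/-- The degree one part, as a left ideal. -/
def degOneIdeal : Submodule T T where
  carrier := {t | G.degOne t = t}
  add_mem' {a b} ha hb := by
    rw [Set.mem_ofPred_eq] at ha hb ⊢
    rw [map_add, ha, hb]
  zero_mem' := map_zero G.degOne
  smul_mem' s t ht := by
    rw [Set.mem_ofPred_eq] at ht ⊢
    rw [smul_eq_mul, G.degOne_mul, ht, ← ht, G.degOne_mul_degOne, zero_add, ht]

/-- The quotient of `T` by its degree one part, as a left `T`-module. -/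
def degZeroModule : AlgModule k T where
  carrier := T ⧸ G.degOneIdeal

/-- The class of `1` in `degZeroModule`. -/
def unit : G.degZeroModule := Submodule.Quotient.mk (p := G.degOneIdeal) (1 : T)

theorem smul_unit_eq_mk (t : T) :
    t • G.unit = Submodule.Quotient.mk (p := G.degOneIdeal) t :=
  congrArg (Submodule.Quotient.mk (p := G.degOneIdeal)) (mul_one t)

theorem smul_unit_eq_zero_iff {t : T} : t • G.unit = 0 ↔ G.degOne t = t :=
  (G.smul_unit_eq_mk t).symm ▸ Submodule.Quotient.mk_eq_zero (p := G.degOneIdeal) (x := t)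

theorem exists_eq_smul_unit (x : G.degZeroModule) : ∃ t : T, x = t • G.unit := by
  obtain ⟨t, rfl⟩ := Submodule.Quotient.mk_surjective G.degOneIdeal x
  exact ⟨t, (G.smul_unit_eq_mk t).symm⟩

theorem degOne_smul_degZeroModule (t : T) (x : G.degZeroModule) : G.degOne t • x = 0 := by
  obtain ⟨s, rfl⟩ := G.exists_eq_smul_unit x
  rw [smul_smul, smul_unit_eq_zero_iff, G.degOne_mul, G.degOne_degOne, G.degOne_mul_degOne,
    add_zero]

variable {M : AlgModule k T}

/-- The map out of `degZeroModule` sending `unit` to an element killed by the degree one part. -/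
def liftDegZero (x : M) (h : ∀ t, G.degOne t • x = 0) : G.degZeroModule →ₗ[T] M :=
  Submodule.liftQ G.degOneIdeal (LinearMap.toSpanSingleton T M x) fun t ht => by
    rw [LinearMap.mem_ker, LinearMap.toSpanSingleton_apply, ← h t]
    exact congrArg (· • x) (Eq.symm ht)

theorem liftDegZero_smul_unit (x : M) (h : ∀ t, G.degOne t • x = 0) (t : T) :
    G.liftDegZero x h (t • G.unit) = t • x := by
  rw [smul_unit_eq_mk]
  exact Submodule.liftQ_apply _ _ _

attribute [irreducible] degZeroModule unit liftDegZero

theorem eq_zero_of_annihilated {V : Type*} [AddCommGroup V] [Module k V]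
    [hM : Module.Projective T M] {f : M →ₗ[k] V} (hf : ∀ t y, f (G.degOne t • y) = 0)
    {x : M} (hx : ∀ t, G.degOne t • x = 0) : f x = 0 := by
  obtain ⟨coords, hcoords⟩ := hM.out
  have degOne_coords (y : M) : G.degOne (coords x y) = coords x y :=
    G.degOne_eq_self_of_annihilated _ fun t => by
      rw [← smul_eq_mul, ← Finsupp.smul_apply, ← map_smul, hx, map_zero, Finsupp.zero_apply]
  rw [← hcoords x, Finsupp.linearCombination_apply, Finsupp.sum, map_sum]
  refine Finset.sum_eq_zero fun y _ => ?_
  rw [← degOne_coords, id_eq, hf]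

theorem eq_zero_of_isStablyZero {c : T} {σ : T →ₐ[k] T}
    (hσ : ∀ t, σ t = G.degZero t + c * G.degOne t) {N : AlgModule k T}
    (hN : ∀ t (x : N), G.degOne t • x = 0) {a : M →ₗ[k] N} (ha : IsStablyZero σ a) {x : M}
    (hx : ∀ t, G.degOne t • x = 0) : a x = 0 := by
  obtain ⟨Q, r, s, hQ, hr, hs, rfl⟩ := ha
  refine G.eq_zero_of_annihilated (f := s) (x := r x) (fun t y => ?_) fun t => ?_
  · rw [hs, hσ, degZero_degOne, zero_add, G.degOne_degOne, mul_smul, hN, smul_zero]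
  · rw [← AlgHom.id_apply (R := k) (G.degOne t), ← hr, hx, map_zero]

end SquareZeroGrading

end SquareZeroGrading

section ModuleGrading

variable {k T : Type u} [Field k] [Ring T] [Algebra k T]

/-- The sequence `0, w 0, w 1, …`. -/
def shift {M : AlgModule k T} (w : ℕ → (M →ₗ[k] M)) : ℕ → (M →ₗ[k] M)
  | 0 => 0
  | d + 1 => w d

/-- A grading of the `T`-module `M` in degrees `0, …, N`, encoded by the projections onto the
homogeneous components. -/
structure ModuleGrading (G : SquareZeroGrading k T) (M : AlgModule k T) (N : ℕ) where
  component : ℕ → (M →ₗ[k] M)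
  component_smul : ∀ d t x, component d (t • x) =
    G.degZero t • component d x + G.degOne t • shift component d x
  component_component : ∀ d e x,
    component d (component e x) = if d = e then component d x else 0
  component_eq_zero : ∀ d, N < d → component d = 0
  sum_component : ∀ x, ∑ d ∈ Finset.range (N + 1), component d x = x

namespace ModuleGrading

open FreeCover

variable {G : SquareZeroGrading k T} {M : AlgModule k T} {N : ℕ} (W : ModuleGrading G M N)

theorem shift_component_shift_component (d e : ℕ) (x : M) :
    shift W.component d (shift W.component e x) = if d = e then shift W.component d x else 0 := by
  match d, e with
  | 0, e => simp [shift]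
  | d + 1, 0 => simp [shift]
  | d + 1, e + 1 => simp [shift, W.component_component]

theorem sum_shift_component (x : M) :
    ∑ d ∈ Finset.range (N + 1 + 1), shift W.component d x = x := by
  rw [Finset.sum_range_succ']
  simpa [shift] using W.sum_component x

theorem sum_component_succ (x : M) : ∑ d ∈ Finset.range (N + 1 + 1), W.component d x = x := by
  rw [Finset.sum_range_succ, W.sum_component, W.component_eq_zero _ (Nat.lt_succ_self N)]
  exact add_zero x

theorem degOne_smul_component_last (t : T) (x : M) : G.degOne t • W.component N x = 0 := by
  have law := W.component_smul (N + 1) t x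
  rw [W.component_eq_zero _ (Nat.lt_succ_self N), LinearMap.zero_apply, LinearMap.zero_apply,
    smul_zero, zero_add] at law
  exact law.symm

theorem degOne_smul_component {x : M} (hx : ∀ t, G.degOne t • x = 0) (d : ℕ) (t : T) :
    G.degOne t • W.component d x = 0 := by
  have law := W.component_smul (d + 1) (G.degOne t) x
  rw [hx, map_zero, G.degOne_degOne, G.degZero_degOne, zero_smul, zero_add] at law
  exact law.symm

theorem component_zero_of_annihilated [Module.Projective T M] {x : M}
    (hx : ∀ t, G.degOne t • x = 0) : W.component 0 x = 0 :=
  G.eq_zero_of_annihilated (fun t y => by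
    rw [W.component_smul, G.degZero_degOne, zero_smul, zero_add, shift, LinearMap.zero_apply,
      smul_zero]) hx

/-- The components of the total grading of `T ⊗[k] M`. -/
def freeCoverComponent (d : ℕ) : FreeCover M →ₗ[k] FreeCover M :=
  FreeCover.map G.degZero (W.component d) + FreeCover.map G.degOne (shift W.component d)

theorem freeCoverComponent_tmul (d : ℕ) (t : T) (x : M) :
    W.freeCoverComponent d (tmul M t x) = tmul M (G.degZero t) (W.component d x) +
      tmul M (G.degOne t) (shift W.component d x) := by
  simp [freeCoverComponent]

theorem ev_freeCoverComponent (d : ℕ) (b : FreeCover M) :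
    ev M (W.freeCoverComponent d b) = W.component d (ev M b) := by
  induction b using FreeCover.induction_on with
  | zero => simp
  | tmul t x => simp [freeCoverComponent_tmul, W.component_smul]
  | add a b ha hb => simp only [map_add, ha, hb]

theorem freeCoverComponent_smul (d : ℕ) (t : T) (b : FreeCover M) :
    W.freeCoverComponent d (t • b) = G.degZero t • W.freeCoverComponent d b +
      G.degOne t • shift W.freeCoverComponent d b := by
  induction b using FreeCover.induction_on with
  | zero => simp
  | tmul s x =>
    cases d with
    | zero => simp [shift, FreeCover.smul_tmul, freeCoverComponent_tmul, G.degZero_mul]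
    | succ d =>
      simp only [shift, FreeCover.smul_tmul, freeCoverComponent_tmul, G.degZero_mul,
        G.degOne_mul_eq, smul_add, map_add, LinearMap.add_apply, G.degOne_mul_degOne, map_zero,
        LinearMap.zero_apply, add_zero]
      abel
  | add a b ha hb =>
    rw [smul_add, map_add, map_add, map_add, ha, hb, smul_add, smul_add]
    abel

/-- The total grading of `T ⊗[k] M`. -/
def freeCover : ModuleGrading G (FreeCover M) (N + 1) where
  component := W.freeCoverComponent
  component_smul := W.freeCoverComponent_smul
  component_component d e b := by
    induction b using FreeCover.induction_on with
    | zero => simp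
    | tmul t x =>
      simp only [freeCoverComponent_tmul, map_add, G.degZero_degZero, G.degZero_degOne,
        G.degOne_degZero, G.degOne_degOne, map_zero, LinearMap.zero_apply,
        W.component_component, W.shift_component_shift_component, add_zero, zero_add]
      split_ifs <;> simp
    | add a b ha hb =>
      rw [map_add, map_add, ha, hb]
      split_ifs <;> simp
  component_eq_zero d hd := hom_ext fun t x => by
    obtain ⟨d, rfl⟩ : ∃ e, d = e + 1 := ⟨d - 1, by lia⟩
    simp [freeCoverComponent_tmul, shift, W.component_eq_zero d (by lia),
      W.component_eq_zero (d + 1) (by lia)]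
  sum_component b := by
    induction b using FreeCover.induction_on with
    | zero => simp
    | tmul t x =>
      simp only [freeCoverComponent_tmul, Finset.sum_add_distrib, ← map_sum,
        W.sum_component_succ, W.sum_shift_component]
      rw [← LinearMap.add_apply, ← map_add, G.degZero_add_degOne]
    | add a b ha hb => simp only [map_add, Finset.sum_add_distrib, ha, hb]

/-- The components of the grading of `Ω M ⊆ T ⊗[k] M`. -/
def syzygyComponent (d : ℕ) : Syzygy M →ₗ[k] Syzygy M :=
  Syzygy.proj M ∘ₗ W.freeCover.component d ∘ₗ Syzygy.incl M

theorem incl_syzygyComponent (d : ℕ) (x : Syzygy M) :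
    Syzygy.incl M (W.syzygyComponent d x) = W.freeCover.component d (Syzygy.incl M x) :=
  Syzygy.incl_proj_of_ev_eq_zero (by
    rw [LinearMap.comp_apply]
    exact (W.ev_freeCoverComponent d _).trans (by rw [Syzygy.ev_incl, map_zero]))

theorem incl_shift_syzygyComponent (d : ℕ) (x : Syzygy M) :
    Syzygy.incl M (shift W.syzygyComponent d x) =
      shift W.freeCover.component d (Syzygy.incl M x) := by
  cases d with
  | zero => simp [shift]
  | succ d => exact W.incl_syzygyComponent d x

/-- The grading of `Ω M` inherited from `T ⊗[k] M`. -/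
def syzygy : ModuleGrading G (Syzygy M) (N + 1) where
  component := W.syzygyComponent
  component_smul d t x := Syzygy.incl_injective M (by
    rw [map_add, incl_syzygyComponent, Syzygy.incl_smul, Syzygy.incl_smul, Syzygy.incl_smul,
      incl_syzygyComponent, incl_shift_syzygyComponent, W.freeCover.component_smul])
  component_component d e x := Syzygy.incl_injective M (by
    rw [incl_syzygyComponent, incl_syzygyComponent, W.freeCover.component_component,
      apply_ite (Syzygy.incl M), incl_syzygyComponent, map_zero])
  component_eq_zero d hd := LinearMap.ext fun x => Syzygy.incl_injective M (by
    rw [incl_syzygyComponent, W.freeCover.component_eq_zero d hd, LinearMap.zero_apply,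
      LinearMap.zero_apply, map_zero])
  sum_component x := Syzygy.incl_injective M (by
    simp only [map_sum, incl_syzygyComponent, W.freeCover.sum_component])

theorem syzygy_component_zero_of_annihilated {x : Syzygy M} (hx : ∀ t, G.degOne t • x = 0) :
    W.syzygy.component 0 x = 0 := by
  refine Syzygy.incl_injective M ((W.incl_syzygyComponent 0 x).trans ?_)
  rw [map_zero]
  exact W.freeCover.component_zero_of_annihilated fun t => by rw [← Syzygy.incl_smul, hx, map_zero]

variable (G)

/-- The grading of `degZeroModule` concentrated in degree zero. -/
def degZeroModule : ModuleGrading G G.degZeroModule 0 where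
  component d := if d = 0 then LinearMap.id else 0
  component_smul d t x := by
    match d with
    | 0 =>
      have smul_eq : t • x = G.degZero t • x := by
        rw [G.degZero_apply, sub_smul, G.degOne_smul_degZeroModule, sub_zero]
      simpa [shift] using smul_eq
    | 1 => simp [shift, G.degOne_smul_degZeroModule]
    | d + 2 => simp [shift]
  component_component d e x := by split_ifs <;> simp_all
  component_eq_zero d hd := if_neg hd.ne'
  sum_component x := by simp

/-- The grading of `Ωⁿ` of `degZeroModule`. -/
def iterSyzygyDegZero : ∀ n, ModuleGrading G (iterSyzygy n G.degZeroModule) n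
  | 0 => degZeroModule G
  | n + 1 => (iterSyzygyDegZero n).syzygy

end ModuleGrading

end ModuleGrading

section PowerScaling

variable {k T : Type u} [Field k] [Ring T] [Algebra k T] {G : SquareZeroGrading k T}

namespace ModuleGrading

open FreeCover

variable {M : AlgModule k T} {N : ℕ} (W : ModuleGrading G M N) (c : T)

/-- The map multiplying the component of degree `d` by `c ^ d`. -/
def powerScaling : M →ₗ[k] M := ∑ d ∈ Finset.range (N + 1), c ^ d • W.component d

theorem powerScaling_apply (x : M) :
    W.powerScaling c x = ∑ d ∈ Finset.range (N + 1), c ^ d • W.component d x := by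
  simp [powerScaling, LinearMap.sum_apply]

theorem powerScaling_component {d : ℕ} (hd : d ∈ Finset.range (N + 1)) (x : M) :
    W.powerScaling c (W.component d x) = c ^ d • W.component d x := by
  simp only [powerScaling_apply, W.component_component, smul_ite, smul_zero]
  rw [Finset.sum_ite_eq', if_pos hd]

theorem ev_powerScaling_freeCover (b : FreeCover M) :
    ev M (W.freeCover.powerScaling c b) = W.powerScaling c (ev M b) := by
  have ev_smul (t : T) (y : FreeCover M) : ev M (t • y) = t • ev M y := isAlgLinear_ev M t y
  have ev_component (d : ℕ) : ev M (W.freeCover.component d b) = W.component d (ev M b) :=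
    W.ev_freeCoverComponent d b
  simp only [powerScaling_apply, map_sum, ev_smul, ev_component]
  rw [Finset.sum_range_succ, W.component_eq_zero _ (Nat.lt_succ_self N), LinearMap.zero_apply,
    smul_zero, add_zero]

theorem incl_powerScaling_syzygy (x : Syzygy M) :
    Syzygy.incl M (W.syzygy.powerScaling c x) = W.freeCover.powerScaling c (Syzygy.incl M x) := by
  have incl_component (d : ℕ) : Syzygy.incl M (W.syzygy.component d x) =
    W.freeCover.component d (Syzygy.incl M x) := W.incl_syzygyComponent d x
  simp only [powerScaling_apply, map_sum, Syzygy.incl_smul, incl_component]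

variable {c} {σ : T →ₐ[k] T}

theorem isSemilinear_powerScaling (hc : ∀ t, Commute c t)
    (hσ : ∀ t, σ t = G.degZero t + c * G.degOne t) : IsSemilinear σ (W.powerScaling c) := by
  intro t x
  have pow_smul_component (d : ℕ) : c ^ d • W.component d (t • x) =
      G.degZero t • c ^ d • W.component d x + G.degOne t • c ^ d • shift W.component d x := by
    rw [W.component_smul, smul_add, smul_smul, smul_smul, smul_smul, smul_smul,
      ((hc _).pow_left d).eq, ((hc _).pow_left d).eq]
  have sum_shift : G.degOne t • ∑ d ∈ Finset.range (N + 1), c ^ d • shift W.component d x =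
      (c * G.degOne t) • ∑ d ∈ Finset.range (N + 1), c ^ d • W.component d x := by
    have last_term : (c * G.degOne t) • c ^ N • W.component N x = 0 := by
      rw [mul_smul, smul_smul (G.degOne t), ← ((hc _).pow_left N).eq, mul_smul,
        W.degOne_smul_component_last, smul_zero, smul_zero]
    rw [Finset.sum_range_succ', Finset.sum_range_succ, smul_add _ _ (c ^ N • W.component N x),
      last_term, (hc _).eq, mul_smul]
    simp only [shift, LinearMap.zero_apply, smul_zero, add_zero, pow_succ', mul_smul,
      Finset.smul_sum]
  rw [powerScaling_apply, powerScaling_apply, hσ, add_smul, ← sum_shift]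
  simp only [pow_smul_component, Finset.sum_add_distrib, ← Finset.smul_sum]

theorem isStablyZero_map_powerScaling_sub (hc : ∀ t, Commute c t)
    (hσ : ∀ t, σ t = G.degZero t + c * G.degOne t) :
    IsStablyZero σ (Syzygy.map σ (W.powerScaling c) - W.syzygy.powerScaling c) := by
  let δ : FreeCover M →ₗ[k] FreeCover M :=
    FreeCover.map σ.toLinearMap (W.powerScaling c) - W.freeCover.powerScaling c
  have isSemilinear_δ : IsSemilinear σ δ :=
    (FreeCover.isSemilinear_map σ _).sub (W.freeCover.isSemilinear_powerScaling hc hσ)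
  have incl_proj_δ (b : FreeCover M) : Syzygy.incl M (Syzygy.proj M (δ b)) = δ b :=
    Syzygy.incl_proj_of_ev_eq_zero (by
      rw [LinearMap.sub_apply, map_sub, ev_map (W.isSemilinear_powerScaling hc hσ),
        ev_powerScaling_freeCover, sub_self])
  refine ⟨FreeCover M, Syzygy.incl M, Syzygy.proj M ∘ₗ δ, inferInstance,
    Syzygy.isAlgLinear_incl M, fun t x => Syzygy.incl_injective M ?_,
    LinearMap.ext fun x => Syzygy.incl_injective M ?_⟩
  · rw [Syzygy.incl_smul, LinearMap.comp_apply, LinearMap.comp_apply, incl_proj_δ, incl_proj_δ,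
      isSemilinear_δ]
  · rw [LinearMap.comp_apply, LinearMap.comp_apply, incl_proj_δ, LinearMap.sub_apply, map_sub,
      Syzygy.incl_map (W.isSemilinear_powerScaling hc hσ), incl_powerScaling_syzygy]
    rfl

theorem isStablyZero_iterSyzygy_map_id_sub (hc : ∀ t, Commute c t)
    (hσ : ∀ t, σ t = G.degZero t + c * G.degOne t) : ∀ n, IsStablyZero σ
      (iterSyzygy.map σ (LinearMap.id : G.degZeroModule →ₗ[k] G.degZeroModule) n -
        (iterSyzygyDegZero G n).powerScaling c)
  | 0 => by
    convert IsStablyZero.zero using 1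
    refine sub_eq_zero.mpr (LinearMap.ext fun x => ?_)
    rw [powerScaling_apply, zero_add, Finset.sum_range_one, pow_zero, one_smul]
    rfl
  | n + 1 => by
    convert ((isStablyZero_iterSyzygy_map_id_sub hc hσ n).syzygy_map).add
      ((iterSyzygyDegZero G n).isStablyZero_map_powerScaling_sub hc hσ) using 1
    rw [Syzygy.map_sub]
    exact (sub_add_sub_cancel _ _ _).symm

end ModuleGrading

namespace SyzygyTransformation

open ModuleGrading

variable {c : T} {σ : T →ₐ[k] T} {n : ℕ} (η : SyzygyTransformation σ n)
  {x : iterSyzygy n G.degZeroModule}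

theorem isAlgLinear_app_degZeroModule (hσ : ∀ t, σ t = G.degZero t + c * G.degOne t) :
    IsAlgLinear (η.app G.degZeroModule) := fun t y => by
  rw [η.isSemilinear_app, hσ, G.degZero_apply, add_smul, sub_smul, mul_smul,
    G.degOne_smul_degZeroModule, smul_zero, sub_zero, add_zero]
  rfl

theorem isStablyZero_app_sub_app_comp_powerScaling (hc : ∀ t, Commute c t)
    (hσ : ∀ t, σ t = G.degZero t + c * G.degOne t) (hx : ∀ t, G.degOne t • x = 0)
    (hunit : η.app G.degZeroModule x = G.unit) :
    IsStablyZero σ (η.app G.degZeroModule - ((-1 : k) ^ n) ^ n •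
      (η.app G.degZeroModule ∘ₗ (iterSyzygyDegZero G n).powerScaling c)) := by
  have hlin := η.isAlgLinear_app_degZeroModule hσ
  have hsection : η.app G.degZeroModule ∘ₗ (G.liftDegZero x hx).restrictScalars k =
      LinearMap.id := LinearMap.ext fun y => by
    obtain ⟨t, rfl⟩ := G.exists_eq_smul_unit y
    rw [LinearMap.comp_apply, LinearMap.restrictScalars_apply, G.liftDegZero_smul_unit, hlin,
      hunit]
    rfl
  have comparison := η.isStablyZero_app_sub_app_comp_map hlin
    (isAlgLinear_restrictScalars _) hsection
  have scaling := ((isStablyZero_iterSyzygy_map_id_sub hc hσ n).semilinear_comp hlin).smul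
    (((-1 : k) ^ n) ^ n)
  convert comparison.add scaling using 1
  rw [LinearMap.comp_sub, smul_sub]
  exact (sub_add_sub_cancel _ _ _).symm

theorem app_component_eq (hc : ∀ t, Commute c t)
    (hσ : ∀ t, σ t = G.degZero t + c * G.degOne t) (hx : ∀ t, G.degOne t • x = 0)
    (hunit : η.app G.degZeroModule x = G.unit) {d : ℕ} (hd : d ∈ Finset.range (n + 1)) :
    η.app G.degZeroModule ((iterSyzygyDegZero G n).component d x) = ((-1 : k) ^ n) ^ n •
      c ^ d • η.app G.degZeroModule ((iterSyzygyDegZero G n).component d x) := by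
  have vanishing := G.eq_zero_of_isStablyZero hσ G.degOne_smul_degZeroModule
    (η.isStablyZero_app_sub_app_comp_powerScaling hc hσ hx hunit)
    ((iterSyzygyDegZero G n).degOne_smul_component hx d)
  rw [LinearMap.sub_apply, sub_eq_zero, LinearMap.smul_apply, LinearMap.comp_apply,
    powerScaling_component _ _ hd, η.isAlgLinear_app_degZeroModule hσ] at vanishing
  exact vanishing

theorem pow_smul_app_component (hn : 1 ≤ n) (hc : ∀ t, Commute c t)
    (hσ : ∀ t, σ t = G.degZero t + c * G.degOne t) (hx : ∀ t, G.degOne t • x = 0)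
    (hunit : η.app G.degZeroModule x = G.unit) {d : ℕ} (hd : d ∈ Finset.range (n + 1)) :
    c ^ (2 * n.factorial) • η.app G.degZeroModule ((iterSyzygyDegZero G n).component d x) =
      η.app G.degZeroModule ((iterSyzygyDegZero G n).component d x) := by
  rcases Nat.eq_zero_or_pos d with rfl | hd_pos
  · obtain ⟨m, rfl⟩ : ∃ m, n = m + 1 := ⟨n - 1, by lia⟩
    have component_zero : (iterSyzygyDegZero G (m + 1)).component 0 x = 0 :=
      (iterSyzygyDegZero G m).syzygy_component_zero_of_annihilated hx
    rw [component_zero, map_zero, smul_zero]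
  · have eigen := η.app_component_eq hc hσ hx hunit hd
    set y := η.app G.degZeroModule ((iterSyzygyDegZero G n).component d x)
    set sign : k := ((-1 : k) ^ n) ^ n
    have sign_mul_self : sign * sign = 1 := by
      rw [← mul_pow, ← mul_pow, neg_one_mul, neg_neg, one_pow, one_pow]
    have fixed : c ^ (2 * d) • y = y := by
      conv_rhs => rw [eigen, eigen]
      rw [smul_comm (c ^ d) sign, smul_smul sign, sign_mul_self, one_smul, smul_smul, ← pow_add,
        two_mul]
    obtain ⟨e, he⟩ : d ∣ n.factorial :=
      Nat.dvd_factorial hd_pos (Nat.lt_succ_iff.mp (Finset.mem_range.mp hd))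
    have fixed_pow : (c ^ (2 * d)) ^ e • y = y := by
      rw [← smul_iterate_apply]
      exact Function.iterate_fixed fixed e
    rwa [he, ← mul_assoc, pow_mul]

theorem pow_smul_unit (hn : 1 ≤ n) (hc : ∀ t, Commute c t)
    (hσ : ∀ t, σ t = G.degZero t + c * G.degOne t) (hx : ∀ t, G.degOne t • x = 0)
    (hunit : η.app G.degZeroModule x = G.unit) :
    c ^ (2 * n.factorial) • G.unit = G.unit := by
  have unit_eq_sum : G.unit = ∑ d ∈ Finset.range (n + 1),
      η.app G.degZeroModule ((iterSyzygyDegZero G n).component d x) := by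
    rw [← map_sum, (iterSyzygyDegZero G n).sum_component, hunit]
  rw [unit_eq_sum, Finset.smul_sum]
  exact Finset.sum_congr rfl fun d hd => η.pow_smul_app_component hn hc hσ hx hunit hd

end SyzygyTransformation

end PowerScaling

section Bimodule

/-- A bimodule over a `k`-algebra `T` on which `k` acts centrally, as a left module together with
a commuting right action. -/
structure AlgBimodule (k T : Type u) [Field k] [Ring T] [Algebra k T] extends AlgModule k T where
  [moduleOp : Module Tᵐᵒᵖ carrier]
  [isScalarTowerOp : IsScalarTower k Tᵐᵒᵖ carrier]
  [smulCommClass : SMulCommClass T Tᵐᵒᵖ carrier]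

variable {k T : Type u} [Field k] [Ring T] [Algebra k T]

instance : CoeSort (AlgBimodule k T) (Type u) := ⟨fun Z => Z.carrier⟩

attribute [instance] AlgBimodule.moduleOp AlgBimodule.isScalarTowerOp AlgBimodule.smulCommClass

/-- Linearity of a `k`-linear map between bimodules for the right actions. -/
def IsRightLinear {Z W : AlgBimodule k T} (f : Z →ₗ[k] W) : Prop :=
  ∀ (b : Tᵐᵒᵖ) (z : Z), f (b • z) = b • f z

/-- Linearity of a `k`-linear map between bimodules for both actions. -/
structure IsBimoduleHom {Z W : AlgBimodule k T} (f : Z →ₗ[k] W) : Prop where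
  left : IsAlgLinear (M := Z.toAlgModule) (N := W.toAlgModule) f
  right : IsRightLinear f

variable {Z W : AlgBimodule k T}

theorem IsRightLinear.id : IsRightLinear (LinearMap.id : Z →ₗ[k] Z) := fun _ _ => rfl

/-- The bundled `Tᵐᵒᵖ`-linear map underlying an `IsRightLinear` one. -/
def IsRightLinear.toLinearMap {f : Z →ₗ[k] W} (hf : IsRightLinear f) : Z →ₗ[Tᵐᵒᵖ] W :=
  { f with map_smul' := hf }

theorem projective_right_of_retract {f : Z →ₗ[k] W} {g : W →ₗ[k] Z} (hf : IsRightLinear f)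
    (hg : IsRightLinear g) (hgf : ∀ z, g (f z) = z) [Module.Projective Tᵐᵒᵖ W] :
    Module.Projective Tᵐᵒᵖ Z :=
  Module.Projective.of_split hf.toLinearMap hg.toLinearMap (LinearMap.ext hgf)

theorem IsSemilinear.exists_lift {Q M N : AlgModule k T} [Module.Projective T Q] {g : M →ₗ[k] N}
    (hg : IsAlgLinear g) (hsurj : Function.Surjective g) {f : Q →ₗ[k] N} (hf : IsAlgLinear f) :
    ∃ l : Q →ₗ[k] M, IsAlgLinear l ∧ ∀ x, g (l x) = f x := by
  obtain ⟨l, hl⟩ :=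
    Module.projective_lifting_property hg.toLinearMap hf.toLinearMap hsurj
  exact ⟨l.restrictScalars k, isAlgLinear_restrictScalars l, LinearMap.congr_fun hl⟩

end Bimodule

section BalancedTensor

variable {k T : Type u} [Field k] [Ring T] [Algebra k T]

/-- The relations `z b ⊗ x = z ⊗ b x` cutting out `Z ⊗[T] N` from `Z ⊗[k] N`. -/
def balancedRelations (Z : AlgBimodule k T) (N : AlgModule k T) : Submodule T (Z ⊗[k] N) :=
  Submodule.span T {w | ∃ (z : Z) (b : T) (x : N),
    w = (MulOpposite.op b • z) ⊗ₜ[k] x - z ⊗ₜ[k] (b • x)}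

/-- The left `T`-module `Z ⊗[T] N` of a bimodule `Z` and a left module `N`; Mathlib's tensor
product is only available over commutative rings. -/
def BalancedTensor (Z : AlgBimodule k T) (N : AlgModule k T) : AlgModule k T where
  carrier := (Z ⊗[k] N) ⧸ balancedRelations Z N

namespace BalancedTensor

variable {Z W : AlgBimodule k T} {M N X : AlgModule k T}

/-- The pure tensors of `Z ⊗[T] N`. -/
def tmul (Z : AlgBimodule k T) (N : AlgModule k T) : Z →ₗ[k] N →ₗ[k] BalancedTensor Z N :=
  (TensorProduct.mk k Z N).compr₂ ((balancedRelations Z N).mkQ.restrictScalars k)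

@[elab_as_elim]
protected theorem induction_on {p : BalancedTensor Z N → Prop} (w : BalancedTensor Z N)
    (zero : p 0) (tmul : ∀ z x, p (tmul Z N z x)) (add : ∀ a b, p a → p b → p (a + b)) : p w := by
  obtain ⟨w, rfl⟩ := (balancedRelations Z N).mkQ_surjective w
  induction w using TensorProduct.induction_on with
  | zero => rw [map_zero]; exact zero
  | tmul z x => exact tmul z x
  | add a b ha hb => rw [map_add]; exact add _ _ ha hb

protected theorem smul_tmul (t : T) (z : Z) (x : N) : t • tmul Z N z x = tmul Z N (t • z) x :=
  congrArg (balancedRelations Z N).mkQ (TensorProduct.smul_tmul' t z x)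

theorem op_smul_tmul (b : T) (z : Z) (x : N) :
    tmul Z N (MulOpposite.op b • z) x = tmul Z N z (b • x) :=
  (Submodule.Quotient.eq (balancedRelations Z N)).mpr (Submodule.subset_span ⟨z, b, x, rfl⟩)

theorem lift_smul_eq_zero {f : Z →ₗ[k] N →ₗ[k] X}
    (h : ∀ (b : T) z x, f (MulOpposite.op b • z) x = f z (b • x)) {w : Z ⊗[k] N}
    (hw : w ∈ balancedRelations Z N) (t : T) : TensorProduct.lift f (t • w) = 0 := by
  induction hw using Submodule.span_induction generalizing t with
  | mem w hw =>
    obtain ⟨z, b, x, rfl⟩ := hw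
    rw [smul_sub, TensorProduct.smul_tmul', TensorProduct.smul_tmul', smul_comm, map_sub,
      TensorProduct.lift.tmul, TensorProduct.lift.tmul, h, sub_self]
  | zero => rw [smul_zero, map_zero]
  | add a b _ _ ha hb => rw [smul_add, map_add, ha, hb, add_zero]
  | smul s w _ ih => rw [smul_smul, ih]

/-- The map out of `Z ⊗[T] N` given by a balanced bilinear map. -/
def lift (f : Z →ₗ[k] N →ₗ[k] X) (h : ∀ (b : T) z x, f (MulOpposite.op b • z) x = f z (b • x)) :
    BalancedTensor Z N →ₗ[k] X :=
  Submodule.liftQ ((balancedRelations Z N).restrictScalars k) (TensorProduct.lift f) fun w hw => by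
    simpa only [one_smul, LinearMap.mem_ker] using lift_smul_eq_zero h hw 1

@[simp]
theorem lift_tmul (f : Z →ₗ[k] N →ₗ[k] X)
    (h : ∀ (b : T) z x, f (MulOpposite.op b • z) x = f z (b • x)) (z : Z) (x : N) :
    lift f h (tmul Z N z x) = f z x := rfl

attribute [irreducible] BalancedTensor tmul lift

theorem hom_ext {f g : BalancedTensor Z N →ₗ[k] X}
    (h : ∀ z x, f (tmul Z N z x) = g (tmul Z N z x)) : f = g :=
  LinearMap.ext fun w => by
    induction w using BalancedTensor.induction_on with
    | zero => rw [map_zero, map_zero]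
    | tmul z x => exact h z x
    | add a b ha hb => rw [map_add, map_add, ha, hb]

theorem isSemilinear_lift {σ : T →ₐ[k] T} {f : Z →ₗ[k] N →ₗ[k] X}
    {h : ∀ (b : T) z x, f (MulOpposite.op b • z) x = f z (b • x)}
    (hf : ∀ t z x, f (t • z) x = σ t • f z x) : IsSemilinear σ (lift f h) := fun t w => by
  induction w using BalancedTensor.induction_on with
  | zero => rw [smul_zero, map_zero, smul_zero]
  | tmul z x => rw [BalancedTensor.smul_tmul, lift_tmul, lift_tmul, hf]
  | add a b ha hb => rw [smul_add, map_add, map_add, ha, hb, smul_add]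

/-- The functoriality `ρ ⊗ f` of the balanced tensor product. -/
def map {ρ : Z →ₗ[k] W} (hρ : IsRightLinear ρ) {f : N →ₗ[k] M} (hf : IsAlgLinear f) :
    BalancedTensor Z N →ₗ[k] BalancedTensor W M :=
  lift ((tmul W M).compl₁₂ ρ f) fun b z x => by
    rw [LinearMap.compl₁₂_apply, LinearMap.compl₁₂_apply, hρ, op_smul_tmul, hf, AlgHom.id_apply]

@[simp]
protected theorem map_tmul {ρ : Z →ₗ[k] W} (hρ : IsRightLinear ρ) {f : N →ₗ[k] M}
    (hf : IsAlgLinear f) (z : Z) (x : N) : map hρ hf (tmul Z N z x) = tmul W M (ρ z) (f x) :=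
  lift_tmul _ _ z x

theorem isAlgLinear_map {ρ : Z →ₗ[k] W} (hρ : IsBimoduleHom ρ) {f : N →ₗ[k] M}
    (hf : IsAlgLinear f) : IsAlgLinear (map hρ.right hf) :=
  isSemilinear_lift fun t z x => by
    rw [LinearMap.compl₁₂_apply, LinearMap.compl₁₂_apply, hρ.left, ← BalancedTensor.smul_tmul,
      AlgHom.id_apply]

theorem map_id_map_comm {ρ : Z →ₗ[k] W} (hρ : IsRightLinear ρ) {f : N →ₗ[k] M}
    (hf : IsAlgLinear f) (w : BalancedTensor Z N) :
    map IsRightLinear.id hf (map hρ IsAlgLinear.id w) =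
      map hρ IsAlgLinear.id (map IsRightLinear.id hf w) :=
  LinearMap.congr_fun (f := map IsRightLinear.id hf ∘ₗ map hρ IsAlgLinear.id)
    (g := map hρ IsAlgLinear.id ∘ₗ map IsRightLinear.id hf) (hom_ext fun z x => by simp) w

theorem map_map_of_leftInverse {f : Z →ₗ[k] W} {g : W →ₗ[k] Z} (hf : IsRightLinear f)
    (hg : IsRightLinear g) (hgf : ∀ z, g (f z) = z) (w : BalancedTensor Z N) :
    map hg IsAlgLinear.id (map hf IsAlgLinear.id w) = w :=
  LinearMap.congr_fun (f := map hg IsAlgLinear.id ∘ₗ map hf IsAlgLinear.id) (g := LinearMap.id)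
    (hom_ext fun z x => by simp [hgf]) w

end BalancedTensor

end BalancedTensor

section RightSplitExact

variable {k T : Type u} [Field k] [Ring T] [Algebra k T] {Y P Z : AlgBimodule k T}

/-- A short exact sequence `0 → Y → P → Z → 0` of bimodules together with a splitting by
right-linear maps. -/
structure RightSplitExact (ι : Y →ₗ[k] P) (π : P →ₗ[k] Z) where
  isBimoduleHom_incl : IsBimoduleHom ι
  isBimoduleHom_proj : IsBimoduleHom π
  retraction : P →ₗ[k] Y
  lift : Z →ₗ[k] P
  isRightLinear_retraction : IsRightLinear retraction
  isRightLinear_lift : IsRightLinear lift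
  retraction_incl : ∀ y, retraction (ι y) = y
  proj_lift : ∀ z, π (lift z) = z
  incl_retraction : ∀ p, ι (retraction p) = p - lift (π p)

theorem nonempty_rightSplitExact {ι : Y →ₗ[k] P} {π : P →ₗ[k] Z} (hι : IsBimoduleHom ι)
    (hπ : IsBimoduleHom π) (hinj : Function.Injective ι) (hsurj : Function.Surjective π)
    (hexact : Function.Exact ι π) [Module.Projective Tᵐᵒᵖ Z] :
    Nonempty (RightSplitExact ι π) := by
  obtain ⟨l, hl⟩ := Module.projective_lifting_property hπ.right.toLinearMap
    (LinearMap.id : Z →ₗ[Tᵐᵒᵖ] Z) hsurj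
  have hπl : ∀ z, π (l z) = z := LinearMap.congr_fun hl
  have hmem : ∀ p, ∃ y, ι y = p - l (π p) := fun p =>
    (hexact _).mp (by rw [map_sub, hπl, sub_self])
  choose r hr using hmem
  let r' : P →ₗ[k] Y :=
    { toFun := r
      map_add' := fun p q => hinj (by simp only [map_add, hr]; abel)
      map_smul' := fun c p => hinj (by
        simp only [map_smul, hr, LinearMap.map_smul_of_tower, smul_sub, RingHom.id_apply]) }
  exact ⟨{
    isBimoduleHom_incl := hι
    isBimoduleHom_proj := hπ
    retraction := r'
    lift := l.restrictScalars k
    isRightLinear_retraction := fun b p => hinj (by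
      change ι (r (b • p)) = ι (b • r p)
      rw [hι.right, hr, hr, hπ.right, map_smul, smul_sub])
    isRightLinear_lift := l.map_smul
    retraction_incl := fun y => hinj (by
      change ι (r (ι y)) = ι y
      rw [hr, (hexact _).mpr ⟨y, rfl⟩, map_zero, sub_zero])
    proj_lift := hπl
    incl_retraction := hr }⟩

namespace RightSplitExact

open BalancedTensor

variable {ι : Y →ₗ[k] P} {π : P →ₗ[k] Z} (S : RightSplitExact ι π) (N : AlgModule k T)

theorem proj_incl (S : RightSplitExact ι π) (y : Y) : π (ι y) = 0 := by
  have h : ι y = ι y - S.lift (π (ι y)) := by rw [← S.incl_retraction, S.retraction_incl]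
  rw [← S.proj_lift (π (ι y)), sub_eq_self.mp h.symm, map_zero]

/-- The map `ι ⊗ N`. -/
def tensorIncl : BalancedTensor Y N →ₗ[k] BalancedTensor P N :=
  BalancedTensor.map S.isBimoduleHom_incl.right IsAlgLinear.id

/-- The map `π ⊗ N`. -/
def tensorProj : BalancedTensor P N →ₗ[k] BalancedTensor Z N :=
  BalancedTensor.map S.isBimoduleHom_proj.right IsAlgLinear.id

/-- The retraction of `ι ⊗ N`, which is only `k`-linear. -/
def tensorRetraction : BalancedTensor P N →ₗ[k] BalancedTensor Y N :=
  BalancedTensor.map S.isRightLinear_retraction IsAlgLinear.id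

/-- The section of `π ⊗ N`, which is only `k`-linear. -/
def tensorLift : BalancedTensor Z N →ₗ[k] BalancedTensor P N :=
  BalancedTensor.map S.isRightLinear_lift IsAlgLinear.id

theorem isAlgLinear_tensorIncl : IsAlgLinear (S.tensorIncl N) :=
  isAlgLinear_map S.isBimoduleHom_incl IsAlgLinear.id

theorem isAlgLinear_tensorProj : IsAlgLinear (S.tensorProj N) :=
  isAlgLinear_map S.isBimoduleHom_proj IsAlgLinear.id

variable {N}

theorem tensorRetraction_tensorIncl (w : BalancedTensor Y N) :
    S.tensorRetraction N (S.tensorIncl N w) = w :=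
  map_map_of_leftInverse _ _ S.retraction_incl w

theorem tensorProj_tensorLift (w : BalancedTensor Z N) : S.tensorProj N (S.tensorLift N w) = w :=
  map_map_of_leftInverse _ _ S.proj_lift w

theorem tensorProj_tensorIncl (w : BalancedTensor Y N) : S.tensorProj N (S.tensorIncl N w) = 0 :=
  LinearMap.congr_fun (f := S.tensorProj N ∘ₗ S.tensorIncl N) (g := 0)
    (hom_ext fun y x => by simp [tensorProj, tensorIncl, S.proj_incl]) w

theorem tensorIncl_tensorRetraction (w : BalancedTensor P N) :
    S.tensorIncl N (S.tensorRetraction N w) = w - S.tensorLift N (S.tensorProj N w) :=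
  LinearMap.congr_fun (f := S.tensorIncl N ∘ₗ S.tensorRetraction N)
    (g := LinearMap.id - S.tensorLift N ∘ₗ S.tensorProj N)
    (hom_ext fun p x => by
      simp [tensorProj, tensorIncl, tensorLift, tensorRetraction, S.incl_retraction]) w

theorem tensorIncl_injective : Function.Injective (S.tensorIncl N) :=
  Function.LeftInverse.injective S.tensorRetraction_tensorIncl

theorem tensorIncl_tensorRetraction_of_mem_ker {w : BalancedTensor P N}
    (hw : S.tensorProj N w = 0) : S.tensorIncl N (S.tensorRetraction N w) = w := by
  rw [tensorIncl_tensorRetraction, hw, map_zero, sub_zero]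

theorem tensorRetraction_smul_of_mem_ker (t : T) {w : BalancedTensor P N}
    (hw : S.tensorProj N w = 0) :
    S.tensorRetraction N (t • w) = t • S.tensorRetraction N w :=
  S.tensorIncl_injective (by
    have htw : S.tensorProj N (t • w) = 0 := by rw [S.isAlgLinear_tensorProj, hw, smul_zero]
    rw [S.tensorIncl_tensorRetraction_of_mem_ker htw, S.isAlgLinear_tensorIncl,
      S.tensorIncl_tensorRetraction_of_mem_ker hw, AlgHom.id_apply])

end RightSplitExact

end RightSplitExact

section SyzygyComparison

open BalancedTensor

variable {k T : Type u} [Field k] [Ring T] [Algebra k T]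

/-- A natural comparison map from the `i`-th syzygy to the functor `Z ⊗[T] -`, as exists when
`Z` is an `i`-th bimodule syzygy of `T`. -/
structure SyzygyComparison (i : ℕ) (Z : AlgBimodule k T) where
  app : ∀ N : AlgModule k T, iterSyzygy i N →ₗ[k] BalancedTensor Z N
  isAlgLinear_app : ∀ N, IsAlgLinear (app N)
  naturality : ∀ {M N : AlgModule k T} {f : M →ₗ[k] N} (hf : IsAlgLinear f) (x : iterSyzygy i M),
    BalancedTensor.map IsRightLinear.id hf (app M x) = app N (iterSyzygy.map (AlgHom.id k T) f i x)

namespace SyzygyComparison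

variable {i : ℕ} {Y P Z : AlgBimodule k T}

/-- The comparison map at `N` has a right inverse in the stable module category. -/
def HasStableSection (ζ : SyzygyComparison i Z) (N : AlgModule k T) : Prop :=
  ∃ j : BalancedTensor Z N →ₗ[k] iterSyzygy i N,
    IsAlgLinear j ∧ IsStablyZero (AlgHom.id k T) (ζ.app N ∘ₗ j - LinearMap.id)

section Retract

variable {f : Y →ₗ[k] Z} {g : Z →ₗ[k] Y}

/-- Transport of a comparison along a map of bimodules. -/
def postcomp (ζ : SyzygyComparison i Z) (hg : IsBimoduleHom g) : SyzygyComparison i Y where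
  app N := BalancedTensor.map hg.right IsAlgLinear.id ∘ₗ ζ.app N
  isAlgLinear_app N := (isAlgLinear_map hg IsAlgLinear.id).comp (ζ.isAlgLinear_app N)
  naturality hf x := by
    rw [LinearMap.comp_apply, LinearMap.comp_apply, map_id_map_comm, ζ.naturality]

theorem HasStableSection.postcomp {ζ : SyzygyComparison i Z} {N : AlgModule k T}
    (h : ζ.HasStableSection N) (hf : IsBimoduleHom f) (hg : IsBimoduleHom g)
    (hgf : ∀ y, g (f y) = y) : (ζ.postcomp hg).HasStableSection N := by
  obtain ⟨j, hj, hzero⟩ := h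
  let F : BalancedTensor Y N →ₗ[k] BalancedTensor Z N := BalancedTensor.map hf.right IsAlgLinear.id
  let G : BalancedTensor Z N →ₗ[k] BalancedTensor Y N := BalancedTensor.map hg.right IsAlgLinear.id
  have hF : IsAlgLinear F := isAlgLinear_map hf IsAlgLinear.id
  have hG : IsAlgLinear G := isAlgLinear_map hg IsAlgLinear.id
  have hGF (w) : G (F w) = w := map_map_of_leftInverse hf.right hg.right hgf w
  have hconj : (G ∘ₗ ζ.app N) ∘ₗ (j ∘ₗ F) - LinearMap.id =
      (G ∘ₗ (ζ.app N ∘ₗ j - LinearMap.id)) ∘ₗ F := LinearMap.ext fun w => by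
    simp only [LinearMap.sub_apply, LinearMap.comp_apply, LinearMap.id_apply, map_sub, hGF]
  refine ⟨j ∘ₗ F, hj.comp hF, ?_⟩
  change IsStablyZero _ ((G ∘ₗ ζ.app N) ∘ₗ (j ∘ₗ F) - LinearMap.id)
  rw [hconj]
  exact (hzero.semilinear_comp hG).comp_linear hF

end Retract

section DimensionShift

variable {ι : Y →ₗ[k] P} {π : P →ₗ[k] Z} (ζ : SyzygyComparison i Z) (S : RightSplitExact ι π)

/-- The lift of the comparison map through `π ⊗ N` to the free cover of `iterSyzygy i N`. -/
def coverLift (N : AlgModule k T) : FreeCover (iterSyzygy i N) →ₗ[k] BalancedTensor P N :=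
  FreeCover.ev (BalancedTensor P N) ∘ₗ
    FreeCover.map (AlgHom.id k T).toLinearMap (S.tensorLift N ∘ₗ ζ.app N)

theorem isAlgLinear_coverLift (N : AlgModule k T) : IsAlgLinear (ζ.coverLift S N) :=
  (FreeCover.isAlgLinear_ev _).comp (FreeCover.isSemilinear_map _ _)

@[simp]
theorem coverLift_tmul (N : AlgModule k T) (t : T) (x : iterSyzygy i N) :
    ζ.coverLift S N (FreeCover.tmul _ t x) = t • S.tensorLift N (ζ.app N x) := by
  simp [coverLift]

theorem tensorProj_coverLift (N : AlgModule k T) (b : FreeCover (iterSyzygy i N)) :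
    S.tensorProj N (ζ.coverLift S N b) = ζ.app N (FreeCover.ev _ b) :=
  LinearMap.congr_fun (f := S.tensorProj N ∘ₗ ζ.coverLift S N) (g := ζ.app N ∘ₗ FreeCover.ev _)
    (FreeCover.hom_ext fun t x => by
      rw [LinearMap.comp_apply, LinearMap.comp_apply, coverLift_tmul, FreeCover.ev_tmul,
        S.isAlgLinear_tensorProj, S.tensorProj_tensorLift, ζ.isAlgLinear_app]) b

theorem tensorProj_coverLift_incl (N : AlgModule k T) (x : Syzygy (iterSyzygy i N)) :
    S.tensorProj N (ζ.coverLift S N (Syzygy.incl _ x)) = 0 := by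
  rw [tensorProj_coverLift, Syzygy.ev_incl, map_zero]

theorem map_coverLift {M N : AlgModule k T} {f : M →ₗ[k] N} (hf : IsAlgLinear f)
    (b : FreeCover (iterSyzygy i M)) :
    BalancedTensor.map IsRightLinear.id hf (ζ.coverLift S M b) = ζ.coverLift S N
      (FreeCover.map (AlgHom.id k T).toLinearMap (iterSyzygy.map (AlgHom.id k T) f i) b) :=
  LinearMap.congr_fun (f := BalancedTensor.map IsRightLinear.id hf ∘ₗ ζ.coverLift S M)
    (g := ζ.coverLift S N ∘ₗ FreeCover.map _ (iterSyzygy.map (AlgHom.id k T) f i))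
    (FreeCover.hom_ext fun t x => by
      rw [LinearMap.comp_apply, LinearMap.comp_apply, coverLift_tmul, FreeCover.map_tmul,
        coverLift_tmul, isAlgLinear_map ⟨IsAlgLinear.id, IsRightLinear.id⟩ hf,
        RightSplitExact.tensorLift, map_id_map_comm, ζ.naturality]
      rfl) b

/-- The comparison map one step further along a right-split bimodule sequence
`0 → Y → P → Z → 0`, induced by `coverLift` on kernels. -/
def shift : SyzygyComparison (i + 1) Y where
  app N := S.tensorRetraction N ∘ₗ ζ.coverLift S N ∘ₗ Syzygy.incl (iterSyzygy i N)
  isAlgLinear_app N t x := by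
    have key (x : Syzygy (iterSyzygy i N)) :
        S.tensorRetraction N (ζ.coverLift S N (Syzygy.incl _ (t • x))) =
          t • S.tensorRetraction N (ζ.coverLift S N (Syzygy.incl _ x)) := by
      rw [Syzygy.incl_smul, ζ.isAlgLinear_coverLift S]
      exact S.tensorRetraction_smul_of_mem_ker t (ζ.tensorProj_coverLift_incl S N x)
    exact key x
  naturality {M N f} hf x := by
    rw [iterSyzygy.map_succ, LinearMap.comp_apply, LinearMap.comp_apply, LinearMap.comp_apply,
      LinearMap.comp_apply, Syzygy.incl_map (iterSyzygy.isSemilinear_map hf i), ← ζ.map_coverLift S]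
    exact map_id_map_comm _ hf _

variable {ζ}

theorem HasStableSection.shift {N : AlgModule k T} (h : ζ.HasStableSection N)
    [Module.Projective T (BalancedTensor P N)] : (ζ.shift S).HasStableSection N := by
  obtain ⟨j, hj, Q, q, s, hQ, hq, hs, hqs⟩ := h
  have hπ := S.isAlgLinear_tensorProj N
  obtain ⟨j', hj', hevj'⟩ := (FreeCover.isAlgLinear_ev (iterSyzygy i N)).exists_lift
    (fun x => ⟨FreeCover.tmul _ 1 x, by simp⟩) (hj.comp hπ)
  obtain ⟨s', hs', hπs'⟩ := hπ.exists_lift (fun w => ⟨_, S.tensorProj_tensorLift w⟩) hs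
  have hevj'ι (w) : FreeCover.ev _ (j' (S.tensorIncl N w)) = 0 := by
    rw [hevj', LinearMap.comp_apply, S.tensorProj_tensorIncl, map_zero]
  let e : BalancedTensor P N →ₗ[k] BalancedTensor P N :=
    ζ.coverLift S N ∘ₗ j' - LinearMap.id - s' ∘ₗ q ∘ₗ S.tensorProj N
  have he : IsAlgLinear e := (((ζ.isAlgLinear_coverLift S N).comp hj').sub IsAlgLinear.id).sub
    (hs'.comp (hq.comp hπ))
  have hπe (w) : S.tensorProj N (e w) = 0 := by
    have := LinearMap.congr_fun hqs (S.tensorProj N w)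
    simp only [LinearMap.sub_apply, LinearMap.comp_apply, LinearMap.id_apply] at this
    simp only [e, LinearMap.sub_apply, LinearMap.comp_apply, LinearMap.id_apply, map_sub,
      tensorProj_coverLift, hevj', hπs', ← this, sub_self]
  refine ⟨Syzygy.proj _ ∘ₗ j' ∘ₗ S.tensorIncl N, fun t w => Syzygy.incl_injective _ ?_,
    BalancedTensor P N, S.tensorIncl N, S.tensorRetraction N ∘ₗ e, inferInstance,
    S.isAlgLinear_tensorIncl N, fun t w => ?_, LinearMap.ext fun w => ?_⟩
  · change Syzygy.incl _ (Syzygy.proj _ (j' (S.tensorIncl N (t • w)))) =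
      Syzygy.incl _ (t • Syzygy.proj _ (j' (S.tensorIncl N w)))
    rw [Syzygy.incl_smul, Syzygy.incl_proj_of_ev_eq_zero (hevj'ι _),
      Syzygy.incl_proj_of_ev_eq_zero (hevj'ι _), S.isAlgLinear_tensorIncl, hj', AlgHom.id_apply,
      AlgHom.id_apply]
  · rw [LinearMap.comp_apply, he]
    exact S.tensorRetraction_smul_of_mem_ker _ (hπe w)
  · change S.tensorRetraction N (ζ.coverLift S N (Syzygy.incl _ (Syzygy.proj _
      (j' (S.tensorIncl N w))))) - w = S.tensorRetraction N (e (S.tensorIncl N w))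
    simp only [Syzygy.incl_proj_of_ev_eq_zero (hevj'ι _), e, LinearMap.sub_apply,
      LinearMap.comp_apply, LinearMap.id_apply, map_sub, S.tensorProj_tensorIncl, map_zero,
      sub_zero, S.tensorRetraction_tensorIncl]

end DimensionShift

end SyzygyComparison

end SyzygyComparison

section Enveloping

variable {k T : Type u} [Field k] [Ring T] [Algebra k T]

/-- The bimodule underlying a module over the enveloping algebra `T ⊗[k] Tᵐᵒᵖ`. -/
def AlgBimodule.ofEnveloping (P : Type u) [AddCommGroup P] [Module (T ⊗[k] Tᵐᵒᵖ) P] :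
    AlgBimodule k T :=
  letI : Module k P := Module.compHom P (algebraMap k (T ⊗[k] Tᵐᵒᵖ))
  letI : Module T P := Module.compHom P
    (Algebra.TensorProduct.includeLeft : T →ₐ[k] T ⊗[k] Tᵐᵒᵖ).toRingHom
  letI : Module Tᵐᵒᵖ P := Module.compHom P
    (Algebra.TensorProduct.includeRight : Tᵐᵒᵖ →ₐ[k] T ⊗[k] Tᵐᵒᵖ).toRingHom
  { carrier := P
    isScalarTower := ⟨fun c t x => by
      change ((c • t) ⊗ₜ[k] 1 : T ⊗[k] Tᵐᵒᵖ) • x = algebraMap k (T ⊗[k] Tᵐᵒᵖ) c •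
        (t ⊗ₜ[k] 1 : T ⊗[k] Tᵐᵒᵖ) • x
      rw [smul_smul, ← Algebra.smul_def, TensorProduct.smul_tmul']⟩
    isScalarTowerOp := ⟨fun c b x => by
      change (1 ⊗ₜ[k] (c • b) : T ⊗[k] Tᵐᵒᵖ) • x = algebraMap k (T ⊗[k] Tᵐᵒᵖ) c •
        (1 ⊗ₜ[k] b : T ⊗[k] Tᵐᵒᵖ) • x
      rw [smul_smul, ← Algebra.smul_def, TensorProduct.tmul_smul]⟩
    smulCommClass := ⟨fun a b x => by
      change (a ⊗ₜ[k] 1 : T ⊗[k] Tᵐᵒᵖ) • (1 ⊗ₜ[k] b : T ⊗[k] Tᵐᵒᵖ) • x =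
        (1 ⊗ₜ[k] b : T ⊗[k] Tᵐᵒᵖ) • (a ⊗ₜ[k] 1 : T ⊗[k] Tᵐᵒᵖ) • x
      simp only [smul_smul, Algebra.TensorProduct.tmul_mul_tmul, one_mul, mul_one]⟩ }

variable {P Q : Type u} [AddCommGroup P] [Module (T ⊗[k] Tᵐᵒᵖ) P] [AddCommGroup Q]
  [Module (T ⊗[k] Tᵐᵒᵖ) Q]

open AlgBimodule (ofEnveloping)

/-- The map of bimodules underlying a map of modules over the enveloping algebra. -/
def envelopingMap (f : P →ₗ[T ⊗[k] Tᵐᵒᵖ] Q) :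
    ofEnveloping (k := k) (T := T) P →ₗ[k] ofEnveloping (k := k) (T := T) Q where
  toFun := f
  map_add' := f.map_add
  map_smul' c := f.map_smul (algebraMap k (T ⊗[k] Tᵐᵒᵖ) c)

theorem isBimoduleHom_envelopingMap (f : P →ₗ[T ⊗[k] Tᵐᵒᵖ] Q) : IsBimoduleHom (envelopingMap f) :=
  ⟨fun t => f.map_smul (t ⊗ₜ[k] 1), fun b => f.map_smul (1 ⊗ₜ[k] b)⟩

theorem map_smul_of_map_tmul_smul {f : P →+ Q}
    (hf : ∀ (a : T) (b : Tᵐᵒᵖ) x,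
      f ((a ⊗ₜ[k] b : T ⊗[k] Tᵐᵒᵖ) • x) = (a ⊗ₜ[k] b : T ⊗[k] Tᵐᵒᵖ) • f x)
    (r : T ⊗[k] Tᵐᵒᵖ) (x : P) : f (r • x) = r • f x := by
  induction r using TensorProduct.induction_on with
  | zero =>
    exact (congrArg f (zero_smul (T ⊗[k] Tᵐᵒᵖ) x)).trans
      ((map_zero f).trans (zero_smul (T ⊗[k] Tᵐᵒᵖ) (f x)).symm)
  | tmul a b => exact hf a b x
  | add r s hr hs => rw [add_smul, add_smul, map_add, hr, hs]

theorem exists_bimodule_lift [Module.Projective (T ⊗[k] Tᵐᵒᵖ) P] {H₁ H₂ : AlgBimodule k T}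
    {π : H₁ →ₗ[k] H₂} (hπ : IsBimoduleHom π) (hsurj : Function.Surjective π)
    {g : ofEnveloping (k := k) (T := T) P →ₗ[k] H₂} (hg : IsBimoduleHom g) :
    ∃ l : ofEnveloping (k := k) (T := T) P →ₗ[k] H₁, IsBimoduleHom l ∧ ∀ x, π (l x) = g x := by
  let i₁ : Module (T ⊗[k] Tᵐᵒᵖ) H₁ := TensorProduct.Algebra.module
  let i₂ : Module (T ⊗[k] Tᵐᵒᵖ) H₂ := TensorProduct.Algebra.module
  have tmul_smul (H : AlgBimodule k T) (a : T) (b : Tᵐᵒᵖ) (x : H) :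
      (TensorProduct.Algebra.module (R := k) (A := T) (B := Tᵐᵒᵖ) (M := H)).smul (a ⊗ₜ[k] b) x =
        a • b • x := TensorProduct.Algebra.smul_def a b x
  have hπ' : ∀ (r : T ⊗[k] Tᵐᵒᵖ) x, π.toAddMonoidHom (r • x) = r • π.toAddMonoidHom x :=
    map_smul_of_map_tmul_smul fun a b x => by
      refine (congrArg π (tmul_smul H₁ a b x)).trans (.trans ?_ (tmul_smul H₂ a b (π x)).symm)
      rw [hπ.left, hπ.right, AlgHom.id_apply]
  let g' : P →+ H₂ := g.toAddMonoidHom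
  have hg' : ∀ (r : T ⊗[k] Tᵐᵒᵖ) x, g' (r • x) = r • g' x :=
    map_smul_of_map_tmul_smul fun a b x => by
      have hab : (a ⊗ₜ[k] b : T ⊗[k] Tᵐᵒᵖ) = (a ⊗ₜ[k] 1) * (1 ⊗ₜ[k] b) := by
        rw [Algebra.TensorProduct.tmul_mul_tmul, mul_one, one_mul]
      refine .trans ?_ (tmul_smul H₂ a b (g x)).symm
      rw [hab, mul_smul]
      exact (hg.left a _).trans (congrArg (a • ·) (hg.right b x))
  obtain ⟨l, hl⟩ := Module.projective_lifting_property
    ({ π with map_smul' := hπ' } : H₁ →ₗ[T ⊗[k] Tᵐᵒᵖ] H₂)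
    ({ g' with map_smul' := hg' } : P →ₗ[T ⊗[k] Tᵐᵒᵖ] H₂) hsurj
  have hleft (t : T) (x : P) : l ((t ⊗ₜ[k] 1 : T ⊗[k] Tᵐᵒᵖ) • x) = t • l x :=
    (l.map_smul _ x).trans ((tmul_smul H₁ t 1 _).trans (congrArg (t • ·) (one_smul _ _)))
  have hright (b : Tᵐᵒᵖ) (x : P) : l ((1 ⊗ₜ[k] b : T ⊗[k] Tᵐᵒᵖ) • x) = b • l x :=
    (l.map_smul _ x).trans ((tmul_smul H₁ 1 b _).trans (one_smul _ _))
  exact ⟨{ toFun := l, map_add' := l.map_add, map_smul' := fun c x =>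
    (hleft (algebraMap k T c) x).trans (algebraMap_smul T c (l x)) }, ⟨hleft, hright⟩,
    LinearMap.congr_fun hl⟩

/-- The `k`-linear maps between two left modules, with the left action on values and the right
action on arguments. -/
def homBimodule (N X : AlgModule k T) : AlgBimodule k T :=
  letI : Module Tᵐᵒᵖ (N →ₗ[k] X) := inferInstanceAs (Module Tᵈᵐᵃ (N →ₗ[k] X))
  { carrier := N →ₗ[k] X
    isScalarTowerOp := ⟨fun c b φ => LinearMap.ext fun x => by
      change φ ((c • b).unop • x) = c • φ (b.unop • x)
      rw [MulOpposite.unop_smul, smul_assoc, map_smul]⟩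
    smulCommClass := ⟨fun _ _ _ => rfl⟩ }

/-- The `k`-linear maps from `T` to a right `T`-module, with the right action on values and the
left action on arguments: the bimodule coinduced from the right module. -/
def coinducedBimodule (X : Type u) [AddCommGroup X] [Module k X] [Module Tᵐᵒᵖ X]
    [IsScalarTower k Tᵐᵒᵖ X] : AlgBimodule k T :=
  letI : SMulCommClass k Tᵐᵒᵖ X := IsScalarTower.to_smulCommClass
  letI : Module T (T →ₗ[k] X) :=
    { smul a φ := φ ∘ₗ LinearMap.mulRight k a
      one_smul φ := by ext t; exact congrArg φ (mul_one t)
      mul_smul a b φ := by ext t; exact congrArg φ (mul_assoc t a b).symm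
      smul_zero _ := rfl
      smul_add _ _ _ := rfl
      add_smul a b φ := by ext t; exact (congrArg φ (mul_add t a b)).trans (map_add φ _ _)
      zero_smul φ := by ext t; exact (congrArg φ (mul_zero t)).trans (map_zero φ) }
  { carrier := T →ₗ[k] X
    isScalarTower := ⟨fun c a φ => by
      ext t
      change φ (t * c • a) = c • φ (t * a)
      rw [mul_smul_comm, map_smul]⟩
    smulCommClass := ⟨fun _ _ _ => rfl⟩ }

variable (k T P)

theorem projective_balancedTensor_ofEnveloping [Module.Projective (T ⊗[k] Tᵐᵒᵖ) P]
    (N : AlgModule k T) :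
    Module.Projective T (BalancedTensor (ofEnveloping (k := k) (T := T) P) N) := by
  let Z : AlgBimodule k T := ofEnveloping P
  let X := BalancedTensor Z N
  let postcomp : homBimodule N (FreeCover X) →ₗ[k] homBimodule N X :=
    LinearMap.compRight k (FreeCover.ev X)
  have hpostcomp : IsBimoduleHom postcomp :=
    ⟨fun t (φ : N →ₗ[k] FreeCover X) => LinearMap.ext fun x =>
      FreeCover.isAlgLinear_ev X t (φ x), fun _ _ => rfl⟩
  have hsurj : Function.Surjective postcomp := fun (φ : N →ₗ[k] X) =>
    ⟨FreeCover.tmul X 1 ∘ₗ φ, LinearMap.ext fun x =>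
      (FreeCover.ev_tmul 1 (φ x)).trans (one_smul T _)⟩
  let g : Z →ₗ[k] homBimodule N X := BalancedTensor.tmul Z N
  have hg : IsBimoduleHom g :=
    ⟨fun t z => LinearMap.ext fun x => (BalancedTensor.smul_tmul t z x).symm,
      fun b z => LinearMap.ext fun x => BalancedTensor.op_smul_tmul b.unop z x⟩
  obtain ⟨l, hl, hlg⟩ := exists_bimodule_lift hpostcomp hsurj hg
  let l' : Z →ₗ[k] N →ₗ[k] FreeCover X := l
  let s : X →ₗ[k] FreeCover X := BalancedTensor.lift l' fun b z x =>
    LinearMap.congr_fun (hl.right (MulOpposite.op b) z) x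
  have hs : IsAlgLinear s := BalancedTensor.isSemilinear_lift fun t z x =>
    LinearMap.congr_fun (hl.left t z) x
  have hev : FreeCover.ev X ∘ₗ s = LinearMap.id := BalancedTensor.hom_ext fun z x =>
    (congrArg (FreeCover.ev X) (BalancedTensor.lift_tmul _ _ z x)).trans
      (LinearMap.congr_fun (hlg z) x)
  exact Module.Projective.of_split hs.toLinearMap (FreeCover.isAlgLinear_ev X).toLinearMap
    (LinearMap.ext fun w => LinearMap.congr_fun hev w)

theorem projective_right_ofEnveloping [Module.Projective (T ⊗[k] Tᵐᵒᵖ) P] :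
    Module.Projective Tᵐᵒᵖ (ofEnveloping (k := k) (T := T) P) := by
  let Z : AlgBimodule k T := ofEnveloping P
  have : SMulCommClass Tᵐᵒᵖ k Z := IsScalarTower.to_smulCommClass'
  let ev : Tᵐᵒᵖ ⊗[k] Z →ₗ[Tᵐᵒᵖ] Z := TensorProduct.AlgebraTensorModule.lift
    (LinearMap.toSpanSingleton Tᵐᵒᵖ (Z →ₗ[k] Z) LinearMap.id)
  let postcomp : coinducedBimodule (k := k) (T := T) (Tᵐᵒᵖ ⊗[k] Z) →ₗ[k]
      coinducedBimodule (k := k) (T := T) Z :=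
    LinearMap.compRight k (ev.restrictScalars k)
  have hpostcomp : IsBimoduleHom postcomp :=
    ⟨fun _ _ => rfl, fun b (φ : T →ₗ[k] Tᵐᵒᵖ ⊗[k] Z) => LinearMap.ext fun t =>
      ev.map_smul b (φ t)⟩
  have hsurj : Function.Surjective postcomp := by
    intro (φ : T →ₗ[k] Z)
    exact ⟨TensorProduct.mk k Tᵐᵒᵖ Z 1 ∘ₗ φ, LinearMap.ext fun t => one_smul Tᵐᵒᵖ (φ t)⟩
  let g : Z →ₗ[k]
      coinducedBimodule (k := k) (T := T) Z :=
    (Algebra.lsmul k k Z : T →ₐ[k] Module.End k Z).toLinearMap.flip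
  have hg : IsBimoduleHom g :=
    ⟨fun t z => LinearMap.ext fun a => (mul_smul a t z).symm,
      fun b z => LinearMap.ext fun a => smul_comm a b z⟩
  obtain ⟨l, hl, hlg⟩ := exists_bimodule_lift hpostcomp hsurj hg
  let l' : Z →ₗ[k] T →ₗ[k] Tᵐᵒᵖ ⊗[k] Z := l
  let s : Z →ₗ[Tᵐᵒᵖ] Tᵐᵒᵖ ⊗[k] Z :=
    { toFun z := l' z 1
      map_add' z w := LinearMap.congr_fun (map_add l' z w) 1
      map_smul' b z := LinearMap.congr_fun (hl.right b z) 1 }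
  exact Module.Projective.of_split s ev
    (LinearMap.ext fun z => (LinearMap.congr_fun (hlg z) 1).trans (one_smul T z))

end Enveloping

section IsSyzygy

/-- `M` is an `n`-th syzygy of `N`: it is the left end of an exact sequence with right end `N` and
`n` projective middle terms, spliced from short exact sequences starting at `N`. -/
def IsSyzygy (R : Type u) [Ring R] : ℕ → ModuleCat.{u} R → ModuleCat.{u} R → Prop
  | 0, M, N => Nonempty (M ≃ₗ[R] N)
  | n + 1, M, N => ∃ P Y : ModuleCat.{u} R, Module.Projective R P ∧
      ∃ (f : Y →ₗ[R] P) (g : P →ₗ[R] N), Function.Injective f ∧ Function.Surjective g ∧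
        Function.Exact f g ∧ IsSyzygy R n M Y

variable {k T : Type u} [Field k] [Ring T] [Algebra k T]

open AlgBimodule (ofEnveloping)

theorem IsSyzygy.exists_syzygyComparison {N₀ : AlgModule k T} :
    ∀ {n i : ℕ} {M N : ModuleCat.{u} (T ⊗[k] Tᵐᵒᵖ)}, IsSyzygy (T ⊗[k] Tᵐᵒᵖ) n M N →
      Module.Projective Tᵐᵒᵖ (ofEnveloping (k := k) (T := T) N) →
      ∀ ζ : SyzygyComparison i (ofEnveloping (k := k) (T := T) N), ζ.HasStableSection N₀ →
      ∃ ζ' : SyzygyComparison (i + n) (ofEnveloping (k := k) (T := T) M), ζ'.HasStableSection N₀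
  | 0, i, M, N, ⟨e⟩, _, ζ, hζ =>
    ⟨ζ.postcomp (isBimoduleHom_envelopingMap e.symm.toLinearMap),
      hζ.postcomp (isBimoduleHom_envelopingMap e.toLinearMap) _ e.symm_apply_apply⟩
  | n + 1, i, M, N, ⟨P, Y, hP, f, g, hf, hg, hfg, h⟩, hN, ζ, hζ => by
    obtain ⟨S⟩ := nonempty_rightSplitExact (isBimoduleHom_envelopingMap f)
      (isBimoduleHom_envelopingMap g) hf hg hfg
    have : Module.Projective T (BalancedTensor (ofEnveloping (k := k) (T := T) P) N₀) :=
      projective_balancedTensor_ofEnveloping k T P N₀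
    have : Module.Projective Tᵐᵒᵖ (ofEnveloping (k := k) (T := T) P) :=
      projective_right_ofEnveloping k T P
    have hY : Module.Projective Tᵐᵒᵖ (ofEnveloping (k := k) (T := T) Y) :=
      projective_right_of_retract S.isBimoduleHom_incl.right S.isRightLinear_retraction
        S.retraction_incl
    rw [Nat.add_comm n 1, ← Nat.add_assoc]
    exact h.exists_syzygyComparison hY (ζ.shift S) (hζ.shift S)

end IsSyzygy

section LeftTwistEquiv

variable {k T : Type u} [Field k] [Ring T] [Algebra k T]

/-- An identification of a bimodule with `T`, the right action being multiplication and the left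
action multiplication through the endomorphism `σ`. -/
structure LeftTwistEquiv (σ : T →ₐ[k] T) (Z : AlgBimodule k T) where
  coord : Z ≃ₗ[k] T
  coord_smul : ∀ (t : T) z, coord (t • z) = σ t * coord z
  coord_op_smul : ∀ (b : T) z, coord (MulOpposite.op b • z) = coord z * b

namespace LeftTwistEquiv

variable {σ : T →ₐ[k] T} {Z : AlgBimodule k T} (E : LeftTwistEquiv σ Z)

/-- The element of the bimodule corresponding to `1`. -/
def gen : Z := E.coord.symm 1

theorem coord_gen : E.coord E.gen = 1 := E.coord.apply_symm_apply 1

theorem op_coord_smul_gen (z : Z) : MulOpposite.op (E.coord z) • E.gen = z :=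
  E.coord.injective (by rw [E.coord_op_smul, coord_gen, one_mul])

theorem smul_gen (t : T) : t • E.gen = MulOpposite.op (σ t) • E.gen :=
  E.coord.injective (by rw [E.coord_op_smul, E.coord_smul, coord_gen, one_mul, mul_one])

theorem projective_right (E : LeftTwistEquiv σ Z) : Module.Projective Tᵐᵒᵖ Z :=
  Module.Projective.of_split
    { toFun z := MulOpposite.op (E.coord z)
      map_add' z w := congrArg MulOpposite.op (map_add E.coord z w)
      map_smul' b z := congrArg MulOpposite.op (E.coord_op_smul b.unop z) }
    (LinearMap.toSpanSingleton Tᵐᵒᵖ Z E.gen) (LinearMap.ext E.op_coord_smul_gen)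

/-- The isomorphism `Z ⊗[T] N → N`, semilinear for `σ`. -/
def contract (N : AlgModule k T) : BalancedTensor Z N →ₗ[k] N :=
  BalancedTensor.lift
    ((Algebra.lsmul k k N : T →ₐ[k] Module.End k N).toLinearMap ∘ₗ E.coord.toLinearMap)
    fun b z x => (congrArg (· • x) (E.coord_op_smul b z)).trans (mul_smul (E.coord z) b x)

theorem contract_tmul {N : AlgModule k T} (z : Z) (x : N) :
    E.contract N (BalancedTensor.tmul Z N z x) = E.coord z • x :=
  BalancedTensor.lift_tmul _ _ z x

theorem isSemilinear_contract (N : AlgModule k T) : IsSemilinear σ (E.contract N) :=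
  BalancedTensor.isSemilinear_lift fun t z x =>
    (congrArg (· • x) (E.coord_smul t z)).trans (mul_smul (σ t) (E.coord z) x)

theorem map_contract {M N : AlgModule k T} {f : M →ₗ[k] N} (hf : IsAlgLinear f)
    (w : BalancedTensor Z M) :
    f (E.contract M w) = E.contract N (BalancedTensor.map IsRightLinear.id hf w) :=
  LinearMap.congr_fun (f := f ∘ₗ E.contract M)
    (g := E.contract N ∘ₗ BalancedTensor.map IsRightLinear.id hf)
    (BalancedTensor.hom_ext fun z x => by
      rw [LinearMap.comp_apply, LinearMap.comp_apply, BalancedTensor.map_tmul, contract_tmul,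
        contract_tmul, hf, AlgHom.id_apply, LinearMap.id_apply]) w

/-- The tautological comparison `N → T ⊗[T] N`. -/
def comparison (E : LeftTwistEquiv (AlgHom.id k T) Z) : SyzygyComparison 0 Z where
  app N := BalancedTensor.tmul Z N E.gen
  isAlgLinear_app N t x := by
    rw [AlgHom.id_apply, BalancedTensor.smul_tmul, E.smul_gen, AlgHom.id_apply,
      BalancedTensor.op_smul_tmul]
  naturality hf x := BalancedTensor.map_tmul _ hf E.gen x

theorem hasStableSection_comparison (E : LeftTwistEquiv (AlgHom.id k T) Z) (N : AlgModule k T) :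
    E.comparison.HasStableSection N := by
  refine ⟨E.contract N, E.isSemilinear_contract N, ?_⟩
  have h : BalancedTensor.tmul Z N E.gen ∘ₗ E.contract N = LinearMap.id :=
    BalancedTensor.hom_ext fun z x => by
      rw [LinearMap.comp_apply, contract_tmul, ← BalancedTensor.op_smul_tmul, op_coord_smul_gen,
        LinearMap.id_apply]
  rw [sub_eq_zero.mpr (show E.comparison.app N ∘ₗ E.contract N = LinearMap.id from h)]
  exact IsStablyZero.zero

/-- The natural family `Ωⁿ N → N` obtained by contracting a comparison with a twist of `T`. -/
def syzygyTransformation {n : ℕ} (ζ : SyzygyComparison n Z) : SyzygyTransformation σ n where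
  app N := E.contract N ∘ₗ ζ.app N
  isSemilinear_app N := (E.isSemilinear_contract N).comp (ζ.isAlgLinear_app N)
  naturality hf := LinearMap.ext fun x =>
    (E.map_contract hf _).trans (congrArg (E.contract _) (ζ.naturality hf x))

theorem degOne_smul_tmul_gen (G : SquareZeroGrading k T) {c : T}
    (hσ : ∀ t, σ t = G.degZero t + c * G.degOne t) (t : T) :
    G.degOne t • BalancedTensor.tmul Z G.degZeroModule E.gen G.unit = 0 := by
  rw [BalancedTensor.smul_tmul, E.smul_gen, BalancedTensor.op_smul_tmul, hσ, G.degZero_degOne,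
    zero_add, mul_smul, G.degOne_smul_degZeroModule, smul_zero, map_zero]

theorem pow_smul_unit_of_isSyzygy (G : SquareZeroGrading k T) {c : T}
    {M N : ModuleCat.{u} (T ⊗[k] Tᵐᵒᵖ)} {n : ℕ} (hn : 1 ≤ n) (h : IsSyzygy (T ⊗[k] Tᵐᵒᵖ) n M N)
    (EM : LeftTwistEquiv σ (AlgBimodule.ofEnveloping M))
    (EN : LeftTwistEquiv (AlgHom.id k T) (AlgBimodule.ofEnveloping N))
    (hc : ∀ t, Commute c t) (hσ : ∀ t, σ t = G.degZero t + c * G.degOne t) :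
    c ^ (2 * n.factorial) • G.unit = G.unit := by
  obtain ⟨ζ, j, hj, hzero⟩ : ∃ ζ : SyzygyComparison n (AlgBimodule.ofEnveloping (T := T) M),
      ζ.HasStableSection G.degZeroModule := by
    have hM := h.exists_syzygyComparison EN.projective_right EN.comparison
      (EN.hasStableSection_comparison G.degZeroModule)
    rwa [Nat.zero_add] at hM
  set x := BalancedTensor.tmul _ G.degZeroModule EM.gen G.unit
  have hx (t : T) : G.degOne t • x = 0 := EM.degOne_smul_tmul_gen G hσ t
  have hjx (t : T) : G.degOne t • j x = 0 := by
    rw [← AlgHom.id_apply (R := k) (G.degOne t), ← hj, hx, map_zero]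
  refine (EM.syzygyTransformation ζ).pow_smul_unit hn hc hσ hjx ?_
  have hzero_x : EM.contract _ (ζ.app _ (j x) - x) = 0 := G.eq_zero_of_isStablyZero hσ
    G.degOne_smul_degZeroModule (hzero.semilinear_comp (EM.isSemilinear_contract _)) hx
  rw [map_sub, sub_eq_zero] at hzero_x
  exact hzero_x.trans (by rw [EM.contract_tmul, EM.coord_gen, one_smul])

end LeftTwistEquiv

end LeftTwistEquiv

section SyzygyOperations

variable {R : Type u} [Ring R]

namespace IsSyzygy

theorem congr_right {L M N : ModuleCat.{u} R} (e : M ≃ₗ[R] N) {n : ℕ} (h : IsSyzygy R n L M) :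
    IsSyzygy R n L N := by
  cases n with
  | zero => exact ⟨h.some.trans e⟩
  | succ n =>
    obtain ⟨P, Y, hP, f, g, hf, hg, hfg, h⟩ := h
    exact ⟨P, Y, hP, f, e.toLinearMap ∘ₗ g, hf, e.surjective.comp hg,
      hfg.comp_injective _ e.injective (map_zero e), h⟩

theorem trans {L M : ModuleCat.{u} R} {m : ℕ} (h : IsSyzygy R m L M) :
    ∀ {n : ℕ} {N : ModuleCat.{u} R}, IsSyzygy R n M N → IsSyzygy R (n + m) L N
  | 0, _, ⟨e⟩ => by rw [Nat.zero_add]; exact h.congr_right e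
  | n + 1, _, ⟨P, Y, hP, f, g, hf, hg, hfg, hY⟩ => by
    rw [Nat.add_right_comm]
    exact ⟨P, Y, hP, f, g, hf, hg, hfg, h.trans hY⟩

theorem congr_left {L M N : ModuleCat.{u} R} (e : M ≃ₗ[R] L) {n : ℕ} (h : IsSyzygy R n L N) :
    IsSyzygy R n M N :=
  (show IsSyzygy R 0 M L from ⟨e⟩).trans h

end IsSyzygy

theorem projective_restrictScalars (ρ : R ≃+* R) (P : ModuleCat.{u} R) [Module.Projective R P] :
    Module.Projective R ((ModuleCat.restrictScalars (ρ : R →+* R)).obj P) := by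
  let : RingHomInvPair (RingHomClass.toRingHom ρ.symm) (RingHomClass.toRingHom ρ) :=
    ⟨RingHom.ext ρ.apply_symm_apply, RingHom.ext ρ.symm_apply_apply⟩
  let : RingHomInvPair (RingHomClass.toRingHom ρ) (RingHomClass.toRingHom ρ.symm) :=
    ⟨RingHom.ext ρ.symm_apply_apply, RingHom.ext ρ.apply_symm_apply⟩
  let e : P ≃ₛₗ[RingHomClass.toRingHom ρ.symm]
      ((ModuleCat.restrictScalars (ρ : R →+* R)).obj P) :=
    { AddEquiv.refl P with
      map_smul' r x := congrArg (· • x) (ρ.apply_symm_apply r).symm }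
  exact Module.Projective.of_equiv e

theorem IsSyzygy.restrictScalars (ρ : R ≃+* R) : ∀ {n : ℕ} {M N : ModuleCat.{u} R},
    IsSyzygy R n M N → IsSyzygy R n ((ModuleCat.restrictScalars (ρ : R →+* R)).obj M)
      ((ModuleCat.restrictScalars (ρ : R →+* R)).obj N)
  | 0, _, _, ⟨e⟩ => ⟨((ModuleCat.restrictScalars (ρ : R →+* R)).mapIso e.toModuleIso).toLinearEquiv⟩
  | _ + 1, _, _, ⟨P, _, _, f, g, hf, hg, hfg, h⟩ =>
    ⟨_, _, projective_restrictScalars ρ P,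
      ((ModuleCat.restrictScalars (ρ : R →+* R)).map (ModuleCat.ofHom f)).hom,
      ((ModuleCat.restrictScalars (ρ : R →+* R)).map (ModuleCat.ofHom g)).hom, hf, hg, hfg,
      h.restrictScalars ρ⟩

end SyzygyOperations

section HasProjExactSeq

variable {R : Type} [Ring R]

theorem isSyzygy_of_hasProjExactSeq :
    ∀ {n : ℕ} {M N : ModuleCat.{0} R}, HasProjExactSeq R M N n → IsSyzygy R n M N
  | 0, _, _, ⟨_, d, e₀, e₁, _, hs, hi, _⟩ =>
    ⟨(e₁.trans (LinearEquiv.ofBijective (d 0) ⟨hi, hs⟩)).trans e₀⟩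
  | n + 1, M, N, ⟨P, d, e₀, e₁, hp, hs, hi, hx⟩ => by
    let Y : ModuleCat.{0} R := ModuleCat.of R (LinearMap.ker (d 0))
    let P' : ℕ → ModuleCat.{0} R
      | 0 => Y
      | i + 1 => P (i + 2)
    let d₀ : P 2 →ₗ[R] Y := (d 1).codRestrict (LinearMap.ker (d 0)) fun x =>
      (hx 0 n.succ_pos).le (LinearMap.mem_range_self _ x)
    let d' : ∀ i, P' (i + 1) →ₗ[R] P' i
      | 0 => d₀
      | i + 1 => d (i + 2)
    have hY : HasProjExactSeq R M Y n := by
      refine ⟨P', d', LinearEquiv.refl R Y, e₁, fun i hi₁ hin => ?_, fun y => ?_, ?_,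
        fun i hin => ?_⟩
      · obtain ⟨i, rfl⟩ := Nat.exists_eq_add_of_le' hi₁
        exact hp (i + 2) (by omega) (by omega)
      · obtain ⟨x, hxy⟩ := (hx 0 n.succ_pos).ge y.2
        exact ⟨x, Subtype.ext hxy⟩
      · cases n with
        | zero => exact fun x y h => hi (congrArg Subtype.val h)
        | succ n => exact hi
      · cases i with
        | zero => exact (hx 1 (by omega)).trans (LinearMap.ker_codRestrict _ _ _).symm
        | succ i => exact hx (i + 2) (by omega)
    exact ⟨P 1, Y, hp 1 le_rfl (by omega), (LinearMap.ker (d 0)).subtype, e₀.toLinearMap ∘ₗ d 0,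
      Subtype.val_injective, e₀.surjective.comp hs,
      (LinearMap.exact_subtype_ker_map (d 0)).comp_injective _ e₀.injective (map_zero e₀),
      isSyzygy_of_hasProjExactSeq hY⟩

theorem hasProjExactSeq_of_isSyzygy :
    ∀ {n : ℕ} {M N : ModuleCat.{0} R}, IsSyzygy R n M N → HasProjExactSeq R M N n
  | 0, _, N, ⟨e⟩ =>
    ⟨fun _ => N, fun _ => LinearMap.id, LinearEquiv.refl R N, e, fun i _ _ => by omega,
      Function.surjective_id, Function.injective_id, fun i h => by omega⟩
  | n + 1, M, N, ⟨P, Y, hP, f, g, hf, hg, hfg, h⟩ => by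
    obtain ⟨Q, d, e₀, e₁, hp, hs, hi, hx⟩ := hasProjExactSeq_of_isSyzygy h
    let P' : ℕ → ModuleCat.{0} R
      | 0 => N
      | 1 => P
      | i + 2 => Q (i + 1)
    let d₁ : Q 1 →ₗ[R] P := f ∘ₗ e₀.toLinearMap ∘ₗ d 0
    have range_d₁ : LinearMap.range d₁ = LinearMap.range f :=
      LinearMap.range_comp_of_range_eq_top _ (LinearMap.range_eq_top.mpr (e₀.surjective.comp hs))
    have ker_d₁ : LinearMap.ker d₁ = LinearMap.ker (d 0) := by
      rw [LinearMap.ker_comp_of_ker_eq_bot _ (LinearMap.ker_eq_bot.mpr hf), LinearEquiv.ker_comp]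
    let d' : ∀ i, P' (i + 1) →ₗ[R] P' i
      | 0 => g
      | 1 => d₁
      | i + 2 => d (i + 1)
    refine ⟨P', d', LinearEquiv.refl R N, e₁, fun i hi₁ hin => ?_, hg, ?_, fun i hin => ?_⟩
    · match i, hi₁, hin with
      | 1, _, _ => exact hP
      | i + 2, _, hin => exact hp (i + 1) (by omega) (by omega)
    · cases n with
      | zero => exact hf.comp (e₀.injective.comp hi)
      | succ n => exact hi
    · match i, hin with
      | 0, _ => exact range_d₁.trans hfg.linearMap_ker_eq.symm
      | 1, hin => exact (hx 0 (by omega)).trans ker_d₁.symm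
      | i + 2, hin => exact hx (i + 1) (by omega)

end HasProjExactSeq

section HasConnection

variable {R : Type u} [Ring R] {δ : R →+ R}

/-- `M` carries a connection over the derivation `δ` of `R`: an additive map satisfying the Leibniz
rule relative to `δ`. -/
def HasConnection (δ : R →+ R) (M : Type u) [AddCommGroup M] [Module R M] : Prop :=
  ∃ D : M →+ M, ∀ (r : R) (m : M), D (r • m) = δ r • m + r • D m

theorem hasConnection_of_projective (hδ : ∀ r s, δ (r * s) = δ r * s + r * δ s) (P : Type u)
    [AddCommGroup P] [Module R P] [hP : Module.Projective R P] : HasConnection δ P := by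
  obtain ⟨s, hs⟩ := hP.out
  let D : (P →₀ R) →+ (P →₀ R) := Finsupp.mapRange.addMonoidHom δ
  have hD (r : R) (f : P →₀ R) : D (r • f) = δ r • f + r • D f :=
    Finsupp.ext fun i => hδ r (f i)
  refine ⟨((Finsupp.linearCombination R (id : P → P)).toAddMonoidHom.comp D).comp
    s.toAddMonoidHom, fun r m => ?_⟩
  simp only [AddMonoidHom.comp_apply, LinearMap.toAddMonoidHom_coe, map_smul, hD, map_add, hs m]

variable {Y P N : Type u} [AddCommGroup Y] [Module R Y] [AddCommGroup P] [Module R P]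
  [AddCommGroup N] [Module R N]

/- The failure of `g` to intertwine the two connections is linear, so it lifts to `P`; subtracting
the lift yields a connection on `P` that preserves the kernel of `g`. -/
theorem HasConnection.of_exact [Module.Projective R P] {f : Y →ₗ[R] P} {g : P →ₗ[R] N}
    (hf : Function.Injective f) (hg : Function.Surjective g) (hfg : Function.Exact f g)
    (hP : HasConnection δ P) (hN : HasConnection δ N) : HasConnection δ Y := by
  obtain ⟨DP, hDP⟩ := hP
  obtain ⟨DN, hDN⟩ := hN
  let defect : P →ₗ[R] N :=
    { toFun p := g (DP p) - DN (g p)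
      map_add' x y := by simp only [map_add]; abel
      map_smul' r x := by
        simp only [hDP, hDN, map_add, map_smul, RingHom.id_apply, smul_sub]
        abel }
  obtain ⟨h, hh⟩ := Module.projective_lifting_property g defect hg
  have g_h (p : P) : g (h p) = g (DP p) - DN (g p) := LinearMap.congr_fun hh p
  have preserves_ker (y : Y) : ∃ y', f y' = DP (f y) - h (f y) := (hfg _).mp <| by
    rw [map_sub, g_h, hfg.apply_apply_eq_zero, map_zero, sub_zero, sub_self]
  choose D hD using preserves_ker
  have D_add (x y : Y) : D (x + y) = D x + D y := hf (by simp only [map_add, hD]; abel)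
  refine ⟨AddMonoidHom.mk' D D_add, fun r m => hf ?_⟩
  simp only [AddMonoidHom.mk'_apply, map_add, map_smul, hD, hDP, smul_sub]
  abel

theorem IsSyzygy.hasConnection (hδ : ∀ r s, δ (r * s) = δ r * s + r * δ s) :
    ∀ {n : ℕ} {M N : ModuleCat.{u} R}, IsSyzygy R n M N → HasConnection δ N → HasConnection δ M
  | 0, _, _, ⟨e⟩, ⟨D, hD⟩ =>
    ⟨(e.symm.toLinearMap.toAddMonoidHom.comp D).comp e.toLinearMap.toAddMonoidHom,
      fun r m => by simp [hD]⟩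
  | _ + 1, _, _, ⟨P, _, _, _, _, hf, hg, hfg, h⟩, hN =>
    h.hasConnection hδ (.of_exact hf hg hfg (hasConnection_of_projective hδ P) hN)

end HasConnection

section IsTwist

variable {k T : Type u} [Field k] [Ring T] [Algebra k T] {φ ψ : T ≃ₐ[k] T}
  {M N : ModuleCat.{u} (T ⊗[k] Tᵐᵒᵖ)}

/-- The bimodule `M` is isomorphic to `T` with its right action twisted by `φ`. -/
def IsTwist (φ : T ≃ₐ[k] T) (M : ModuleCat.{u} (T ⊗[k] Tᵐᵒᵖ)) : Prop :=
  ∃ e : M ≃+ T, ∀ (a : T) (b : Tᵐᵒᵖ) (x : M),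
    e ((a ⊗ₜ[k] b : T ⊗[k] Tᵐᵒᵖ) • x) = a * e x * φ b.unop

theorem IsTwist.nonempty_linearEquiv (hM : IsTwist φ M) (hN : IsTwist φ N) :
    Nonempty (M ≃ₗ[T ⊗[k] Tᵐᵒᵖ] N) := by
  obtain ⟨e, he⟩ := hM
  obtain ⟨e', he'⟩ := hN
  let f : M ≃+ N := e.trans e'.symm
  have hf (a : T) (b : Tᵐᵒᵖ) (x : M) :
      f ((a ⊗ₜ[k] b : T ⊗[k] Tᵐᵒᵖ) • x) = (a ⊗ₜ[k] b : T ⊗[k] Tᵐᵒᵖ) • f x :=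
    e'.injective (by simp only [f, AddEquiv.trans_apply, AddEquiv.apply_symm_apply, he, he'])
  exact ⟨{ f with map_smul' := map_smul_of_map_tmul_smul (f := f.toAddMonoidHom) hf }⟩

theorem IsTwist.of_conj (hM : IsTwist φ M) (u : Tˣ) (hu : ∀ b, φ b * u = u * ψ b) :
    IsTwist ψ M := by
  obtain ⟨e, he⟩ := hM
  refine ⟨e.trans (AddAut.mulRight u), fun a b x => ?_⟩
  change e ((a ⊗ₜ[k] b : T ⊗[k] Tᵐᵒᵖ) • x) * u = a * (e x * u) * ψ b.unop
  rw [he, mul_assoc (a * e x), hu, ← mul_assoc, ← mul_assoc]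

/-- The automorphism of the enveloping algebra applying `ψ` to the right tensor factor. -/
noncomputable def envelopingTwist (ψ : T ≃ₐ[k] T) : (T ⊗[k] Tᵐᵒᵖ) ≃+* (T ⊗[k] Tᵐᵒᵖ) :=
  (Algebra.TensorProduct.congr (AlgEquiv.refl : T ≃ₐ[k] T) (AlgEquiv.op ψ)).toRingEquiv

theorem IsTwist.restrictScalars (hM : IsTwist φ M) (ψ : T ≃ₐ[k] T) :
    IsTwist (φ * ψ)
      ((ModuleCat.restrictScalars (envelopingTwist ψ : T ⊗[k] Tᵐᵒᵖ →+* T ⊗[k] Tᵐᵒᵖ)).obj M) := by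
  obtain ⟨e, he⟩ := hM
  exact ⟨e, fun a b x => he a (MulOpposite.op (ψ b.unop)) x⟩

theorem IsTwist.nonempty_leftTwistEquiv (hM : IsTwist φ M) :
    Nonempty (LeftTwistEquiv (φ.symm : T →ₐ[k] T) (AlgBimodule.ofEnveloping M)) := by
  obtain ⟨e, he⟩ := hM
  let coord : AlgBimodule.ofEnveloping (k := k) (T := T) M ≃+ T := e.trans φ.symm.toAddEquiv
  have coord_smul (a : T) (b : Tᵐᵒᵖ) (x : M) :
      φ.symm (e ((a ⊗ₜ[k] b : T ⊗[k] Tᵐᵒᵖ) • x)) = φ.symm a * φ.symm (e x) * b.unop := by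
    rw [he, map_mul, map_mul, AlgEquiv.symm_apply_apply]
  exact
    ⟨{ coord :=
        { coord with
          map_smul' := fun c x => (coord_smul (algebraMap k T c) 1 x).trans <| by
            rw [MulOpposite.unop_one, mul_one, AlgEquiv.commutes, ← Algebra.smul_def]; rfl }
       coord_smul := fun t x => (coord_smul t 1 x).trans (mul_one _)
       coord_op_smul := fun b x => (coord_smul 1 (MulOpposite.op b) x).trans <| by
        rw [map_one, one_mul]; rfl }⟩

end IsTwist

section EnvelopingDerivation

variable {k T : Type u} [Field k] [Ring T] [Algebra k T] (G : SquareZeroGrading k T)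

/-- The derivation `δ ⊗ 1 + 1 ⊗ δ` of the enveloping algebra, where `δ` is the projection onto
degree one. -/
noncomputable def envelopingDerivation : (T ⊗[k] Tᵐᵒᵖ) →ₗ[k] (T ⊗[k] Tᵐᵒᵖ) :=
  TensorProduct.map G.degOne LinearMap.id + TensorProduct.map LinearMap.id
    ((MulOpposite.opLinearEquiv k).toLinearMap ∘ₗ G.degOne ∘ₗ
      (MulOpposite.opLinearEquiv k).symm.toLinearMap)

theorem envelopingDerivation_tmul (a : T) (b : Tᵐᵒᵖ) :
    envelopingDerivation G (a ⊗ₜ b) =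
      G.degOne a ⊗ₜ b + a ⊗ₜ MulOpposite.op (G.degOne b.unop) := rfl

theorem envelopingDerivation_mul (r s : T ⊗[k] Tᵐᵒᵖ) :
    envelopingDerivation G (r * s) =
      envelopingDerivation G r * s + r * envelopingDerivation G s := by
  induction r using TensorProduct.induction_on with
  | zero => simp only [zero_mul, map_zero, add_zero]
  | add r r' hr hr' => rw [add_mul, map_add, map_add, hr, hr', add_mul, add_mul]; abel
  | tmul a b =>
    induction s using TensorProduct.induction_on with
    | zero => simp only [mul_zero, map_zero, add_zero]
    | add s s' hs hs' => rw [mul_add, map_add, map_add, hs, hs', mul_add, mul_add]; abel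
    | tmul c d =>
      simp only [Algebra.TensorProduct.tmul_mul_tmul, envelopingDerivation_tmul,
        MulOpposite.unop_mul, G.degOne_mul, MulOpposite.op_add, MulOpposite.op_mul,
        MulOpposite.op_unop, add_mul, mul_add, TensorProduct.add_tmul, TensorProduct.tmul_add]
      abel

variable {φ : T ≃ₐ[k] T} {M : ModuleCat.{u} (T ⊗[k] Tᵐᵒᵖ)}

theorem IsTwist.hasConnection_envelopingDerivation (hM : IsTwist (1 : T ≃ₐ[k] T) M) :
    HasConnection (envelopingDerivation G).toAddMonoidHom M := by
  obtain ⟨e, he⟩ := hM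
  let D : M →+ M := (e.symm.toAddMonoidHom.comp G.degOne.toAddMonoidHom).comp e.toAddMonoidHom
  have e_D (x : M) : e (D x) = G.degOne (e x) := e.apply_symm_apply _
  refine ⟨D, fun r x => ?_⟩
  change D (r • x) = envelopingDerivation G r • x + r • D x
  induction r using TensorProduct.induction_on with
  | zero =>
    have zero_smul' (y : M) : (0 : T ⊗[k] Tᵐᵒᵖ) • y = 0 := zero_smul (T ⊗[k] Tᵐᵒᵖ) y
    rw [map_zero, zero_smul', zero_smul', map_zero, add_zero]
  | add r s hr hs => rw [add_smul, map_add, hr, hs, map_add, add_smul, add_smul]; abel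
  | tmul a b =>
    refine e.injective ?_
    rw [envelopingDerivation_tmul, add_smul]
    simp only [map_add, e_D, he, AlgEquiv.one_apply, G.degOne_mul, MulOpposite.unop_op, add_mul]
    abel

/-- `w` measures the failure of `φ` to be homogeneous: the commutator with `w`, evaluated on the
image of `φ`, is the commutator of `φ` with the derivation `G.degOne`. -/
def IsDegreeDefect (φ : T ≃ₐ[k] T) (w : T) : Prop :=
  ∀ b, w * φ b - φ b * w = G.degOne (φ b) - φ (G.degOne b)

/- A connection `D` on the twist of `T` by `φ` is compared with the relation `φ b • 1 = 1 • b`; the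
element `w` is `D 1`. -/
theorem IsTwist.exists_isDegreeDefect_of_hasConnection (hM : IsTwist φ M)
    (hD : HasConnection (envelopingDerivation G).toAddMonoidHom M) :
    ∃ w : T, IsDegreeDefect G φ w := by
  obtain ⟨e, he⟩ := hM
  obtain ⟨D, hD⟩ := hD
  replace hD (r : T ⊗[k] Tᵐᵒᵖ) (x : M) : D (r • x) = envelopingDerivation G r • x + r • D x :=
    hD r x
  have degOne_one : G.degOne 1 = 0 := by simpa using G.degOne_mul 1 1
  refine ⟨e (D (e.symm 1)), fun b => ?_⟩
  have hgen : (φ b ⊗ₜ[k] (1 : Tᵐᵒᵖ)) • e.symm 1 =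
      ((1 : T) ⊗ₜ[k] MulOpposite.op b) • e.symm 1 := e.injective (by simp [he])
  have h := congrArg (fun x => e (D x)) hgen
  simp only [hD, envelopingDerivation_tmul, MulOpposite.unop_one, MulOpposite.unop_op, degOne_one,
    MulOpposite.op_zero, TensorProduct.tmul_zero, TensorProduct.zero_tmul, add_zero, zero_add,
    map_add, he, map_one, AddEquiv.apply_symm_apply, mul_one, one_mul] at h
  rw [sub_eq_sub_iff_add_eq_add, h, add_comm]

end EnvelopingDerivation

section IsTwistedPeriod

variable {k T : Type u} [Field k] [Ring T] [Algebra k T] {n m : ℕ} {φ ψ : T ≃ₐ[k] T}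

/-- `n ≥ 1` and the twist of the bimodule `T` by `φ` is an `n`-th syzygy of `T` over the enveloping
algebra. -/
def IsTwistedPeriod (n : ℕ) (φ : T ≃ₐ[k] T) : Prop :=
  1 ≤ n ∧ ∃ M N : ModuleCat.{u} (T ⊗[k] Tᵐᵒᵖ),
    IsTwist φ M ∧ IsTwist (1 : T ≃ₐ[k] T) N ∧ IsSyzygy (T ⊗[k] Tᵐᵒᵖ) n M N

namespace IsTwistedPeriod

theorem mul (hφ : IsTwistedPeriod n φ) (hψ : IsTwistedPeriod m ψ) :
    IsTwistedPeriod (m + n) (φ * ψ) := by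
  obtain ⟨_, M, N, hM, hN, h⟩ := hφ
  obtain ⟨hm, M', N', hM', hN', h'⟩ := hψ
  obtain ⟨e⟩ := (hN.restrictScalars ψ).nonempty_linearEquiv ((one_mul ψ).symm ▸ hM')
  exact ⟨by omega, _, N', hM.restrictScalars ψ, hN',
    ((h.restrictScalars (envelopingTwist ψ)).congr_right e).trans h'⟩

theorem pow (h : IsTwistedPeriod n φ) {N : ℕ} (hN : 1 ≤ N) :
    IsTwistedPeriod (N * n) (φ ^ N) := by
  induction N, hN using Nat.le_induction with
  | base => rwa [Nat.one_mul, pow_one]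
  | succ N _ ih => rw [Nat.succ_mul, Nat.add_comm, pow_succ]; exact ih.mul h

theorem of_conj (h : IsTwistedPeriod n φ) (u : Tˣ) (hu : ∀ b, φ b * u = u * ψ b) :
    IsTwistedPeriod n ψ := by
  obtain ⟨hn, M, N, hM, hN, h⟩ := h
  exact ⟨hn, M, N, hM.of_conj u hu, hN, h⟩

theorem exists_isDegreeDefect (G : SquareZeroGrading k T) (h : IsTwistedPeriod n φ) :
    ∃ w : T, IsDegreeDefect G φ w := by
  obtain ⟨_, M, N, hM, hN, h⟩ := h
  exact hM.exists_isDegreeDefect_of_hasConnection G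
    (h.hasConnection (envelopingDerivation_mul G) (hN.hasConnection_envelopingDerivation G))

theorem pow_smul_unit (G : SquareZeroGrading k T) (h : IsTwistedPeriod n φ) {c : T}
    (hc : ∀ t, Commute c t) (hφ : ∀ t, φ.symm t = G.degZero t + c * G.degOne t) :
    c ^ (2 * n.factorial) • G.unit = G.unit := by
  obtain ⟨hn, M, N, hM, hN, h⟩ := h
  obtain ⟨EM⟩ := hM.nonempty_leftTwistEquiv
  obtain ⟨EN⟩ := hN.nonempty_leftTwistEquiv
  exact EM.pow_smul_unit_of_isSyzygy G hn h EN hc hφ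

end IsTwistedPeriod

end IsTwistedPeriod

section PeriodicAlgebra

variable {k T : Type} [Field k] [Ring T] [Algebra k T]

theorem isTwist_regularBimodule : IsTwist (1 : T ≃ₐ[k] T) (regularBimodule k T) :=
  ⟨AddEquiv.refl T, fun a b x => (mul_assoc a x b.unop).symm⟩

theorem isTwist_twistedBimodule (φ : T ≃ₐ[k] T) : IsTwist φ (twistedBimodule k T φ) :=
  ⟨AddEquiv.refl T, fun a b x => (mul_assoc a x (φ b.unop)).symm⟩

theorem isPeriodicAlgebra_iff_exists_isTwistedPeriod_one :
    IsPeriodicAlgebra k T ↔ ∃ n, IsTwistedPeriod n (1 : T ≃ₐ[k] T) := by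
  constructor
  · rintro ⟨n, hn, h⟩
    exact ⟨n, hn, _, _, isTwist_regularBimodule, isTwist_regularBimodule,
      isSyzygy_of_hasProjExactSeq h⟩
  · rintro ⟨n, hn, M, N, hM, hN, h⟩
    obtain ⟨eM⟩ := isTwist_regularBimodule.nonempty_linearEquiv hM
    obtain ⟨eN⟩ := hN.nonempty_linearEquiv isTwist_regularBimodule
    exact ⟨n, hn, hasProjExactSeq_of_isSyzygy ((h.congr_right eN).congr_left eM)⟩

theorem isTwistedPeriodicAlgebra_iff_exists_isTwistedPeriod :
    IsTwistedPeriodicAlgebra k T ↔ ∃ (n : ℕ) (φ : T ≃ₐ[k] T), IsTwistedPeriod n φ := by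
  constructor
  · rintro ⟨n, φ, hn, h⟩
    exact ⟨n, φ, hn, _, _, isTwist_twistedBimodule φ, isTwist_regularBimodule,
      isSyzygy_of_hasProjExactSeq h⟩
  · rintro ⟨n, φ, hn, M, N, hM, hN, h⟩
    obtain ⟨eM⟩ := (isTwist_twistedBimodule φ).nonempty_linearEquiv hM
    obtain ⟨eN⟩ := hN.nonempty_linearEquiv isTwist_regularBimodule
    exact ⟨n, φ, hn, hasProjExactSeq_of_isSyzygy ((h.congr_right eN).congr_left eM)⟩

end PeriodicAlgebra

section Radical

open Polynomial

theorem finite_setOf_aeval_eq_zero {k Z : Type*} [Field k] [CommRing Z] [Algebra k Z]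
    [IsArtinianRing Z] [IsReduced Z] {p : k[X]} (hp : p ≠ 0) : {z : Z | aeval z p = 0}.Finite := by
  let residues : Z → ∀ m : MaximalSpectrum Z, Z ⧸ m.asIdeal := IsArtinianRing.equivPi Z
  have hroots (m : MaximalSpectrum Z) : {y : Z ⧸ m.asIdeal | aeval y p = 0}.Finite := by
    have := m.isMaximal
    exact (p.rootSet_finite (Z ⧸ m.asIdeal)).subset fun y hy => mem_rootSet.mpr ⟨hp, hy⟩
  refine ((Set.Finite.pi hroots).subset ?_).of_finite_image
    (f := residues) (IsArtinianRing.equivPi Z).injective.injOn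
  rintro _ ⟨z, hz, rfl⟩ m -
  change aeval (Ideal.Quotient.mkₐ k m.asIdeal z) p = 0
  rw [aeval_algHom_apply, show aeval z p = 0 from hz, map_zero]

theorem mem_jacobson_of_forall_isNilpotent_mul {S : Type*} [Ring S] {x : S}
    (h : ∀ y, IsNilpotent (y * x)) : x ∈ Ring.jacobson S := by
  rw [← Ideal.jacobson_bot, Ideal.mem_jacobson_iff]
  intro y
  obtain ⟨u, hu⟩ := (h y).isUnit_one_add
  refine ⟨↑u⁻¹, (Submodule.mem_bot S).mpr ?_⟩
  rw [mul_assoc, ← mul_add_one, add_comm (y * x), ← hu, Units.inv_mul, sub_self]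

theorem isReduced_center_of_jacobson_eq_bot {k S : Type*} [Field k] [Ring S] [Algebra k S]
    (hS : Ring.jacobson S = ⊥) : IsReduced (Subalgebra.center k S) := by
  refine ⟨fun z ⟨n, hn⟩ => ?_⟩
  have hz : (z : S) ∈ Ring.jacobson S := mem_jacobson_of_forall_isNilpotent_mul fun y => ⟨n, by
    rw [Commute.mul_pow (Subalgebra.mem_center_iff.mp z.2 y), ← SubmonoidClass.coe_pow, hn,
      ZeroMemClass.coe_zero, mul_zero]⟩
  rw [hS] at hz
  exact Subtype.ext hz

theorem finite_setOf_mem_center_aeval_eq_zero {k S : Type*} [Field k] [Ring S] [Algebra k S]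
    [FiniteDimensional k S] (hS : Ring.jacobson S = ⊥) {p : k[X]} (hp : p ≠ 0) :
    {z : S | z ∈ Subalgebra.center k S ∧ aeval z p = 0}.Finite := by
  have : FiniteDimensional k (Subalgebra.center k S) :=
    inferInstanceAs (FiniteDimensional k (Subalgebra.toSubmodule (Subalgebra.center k S)))
  have : IsArtinianRing (Subalgebra.center k S) := IsArtinianRing.of_finite k _
  have : IsReduced (Subalgebra.center k S) := isReduced_center_of_jacobson_eq_bot hS
  refine ((finite_setOf_aeval_eq_zero (Z := Subalgebra.center k S) hp).image Subtype.val).subset ?_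
  rintro z ⟨hz, hpz⟩
  refine ⟨⟨z, hz⟩, Subtype.ext ?_, rfl⟩
  change (Subalgebra.center k S).val (aeval _ p) = 0
  rwa [← aeval_algHom_apply]

theorem map_mem_jacobson {S : Type*} [Ring S] {F : Type*} [EquivLike F S S] [RingEquivClass F S S]
    (φ : F) {x : S} (hx : x ∈ Ring.jacobson S) : φ x ∈ Ring.jacobson S :=
  have : RingHomSurjective (φ : S →+* S) := ⟨EquivLike.surjective φ⟩
  Ring.le_comap_jacobson (φ : S →+* S) hx

theorem pow_apply_sub_mem_jacobson {k S : Type*} [Field k] [Ring S] [Algebra k S] {φ : S ≃ₐ[k] S}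
    {w : S} (hw : φ w - w ∈ Ring.jacobson S) (i : ℕ) :
    (φ ^ i) w - w ∈ Ring.jacobson S := by
  induction i with
  | zero => simp
  | succ i ih =>
    rw [pow_succ, AlgEquiv.mul_apply, ← sub_add_sub_cancel _ ((φ ^ i) w), ← map_sub]
    exact add_mem (map_mem_jacobson (φ ^ i) hw) ih

theorem apply_sum_pow_sub_mem_jacobson {k S : Type*} [Field k] [Ring S] [Algebra k S]
    {φ : S ≃ₐ[k] S} {w : S} {N : ℕ} (hw : (φ ^ N) w - w ∈ Ring.jacobson S) :
    (φ ^ N) (∑ i ∈ Finset.range N, (φ ^ i) w) - ∑ i ∈ Finset.range N, (φ ^ i) w ∈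
      Ring.jacobson S := by
  rw [map_sum, ← Finset.sum_sub_distrib]
  refine sum_mem fun i _ => ?_
  rw [← AlgEquiv.mul_apply, ← pow_add, add_comm, pow_add, AlgEquiv.mul_apply, ← map_sub]
  exact map_mem_jacobson (φ ^ i) hw

/- In characteristic zero only finitely many `M` fail, one for each eigenvalue of `L`; in
characteristic `p` take `M = p`. -/
theorem exists_add_natCast_smul_injective {k V : Type*} [Field k] [AddCommGroup V] [Module k V]
    [FiniteDimensional k V] (L : Module.End k V) :
    ∃ M : ℕ, 1 ≤ M ∧ ∀ x, x + (M : k) • L x = 0 → x = 0 := by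
  obtain ⟨p, hp⟩ := CharP.exists k
  rcases eq_or_ne p 0 with rfl | hp0
  · have : CharZero k := CharP.charP_to_charZero k
    have hinj : Function.Injective fun n : ℕ => -((n + 1 : ℕ) : k)⁻¹ := fun a b h =>
      Nat.succ_injective (Nat.cast_injective (inv_injective (neg_injective h)))
    obtain ⟨n, hn⟩ :=
      ((Module.End.finite_hasEigenvalue L).preimage hinj.injOn).infinite_compl.nonempty
    refine ⟨n + 1, Nat.le_add_left 1 n, fun x hx => by_contra fun hne => hn ?_⟩
    refine Module.End.hasEigenvalue_of_hasEigenvector ⟨Module.End.mem_eigenspace_iff.mpr ?_, hne⟩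
    have hM : ((n + 1 : ℕ) : k) ≠ 0 := Nat.cast_ne_zero.mpr n.succ_ne_zero
    have hLx : ((n + 1 : ℕ) : k) • L x = -x := eq_neg_of_add_eq_zero_right hx
    rw [neg_smul, ← smul_neg, ← hLx, inv_smul_smul₀ hM]
  · refine ⟨p, Nat.one_le_iff_ne_zero.mpr hp0, fun x hx => ?_⟩
    rwa [CharP.cast_eq_zero, zero_smul, add_zero] at hx

theorem mem_of_apply_mem_of_injective {k V : Type*} [Field k] [AddCommGroup V] [Module k V]
    [FiniteDimensional k V] {F : V →ₗ[k] V} (hF : Function.Injective F) {Q : Submodule k V}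
    (hQ : ∀ y ∈ Q, F y ∈ Q) {x : V} (hx : F x ∈ Q) : x ∈ Q := by
  have hsurj : Function.Surjective (F.restrict hQ) :=
    LinearMap.injective_iff_surjective.mp fun a b h => Subtype.ext (hF (congrArg Subtype.val h))
  obtain ⟨y, hy⟩ := hsurj ⟨F x, hx⟩
  exact hF (congrArg Subtype.val hy) ▸ y.2

/- Modulo `j` the operator `1 + ad v` is bijective on every power of the radical, so `x` lies in
each of them. -/
theorem eq_zero_of_commutator_add_eq_neg {k S : Type*} [Field k] [Ring S] [Algebra k S]
    [FiniteDimensional k S] {v j x : S} (hj : j ∈ Ring.jacobson S)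
    (hv : ∀ y : S, y + (v * y - y * v) = 0 → y = 0)
    (hx : (v + j) * x - x * (v + j) = -x) : x = 0 := by
  have : IsArtinianRing S := IsArtinianRing.of_finite k S
  let F : S →ₗ[k] S := LinearMap.id + (LinearMap.mulLeft k v - LinearMap.mulRight k v)
  have hF : Function.Injective F := LinearMap.ker_eq_bot.mp (LinearMap.ker_eq_bot'.mpr hv)
  have hFx : F x = x * j - j * x := by
    change x + (v * x - x * v) = _
    linear_combination (norm := noncomm_ring) hx
  have hpow (i : ℕ) : x ∈ Ring.jacobson S ^ i := by
    induction i with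
    | zero => rw [Submodule.pow_zero, Ideal.one_eq_top]; exact Submodule.mem_top
    | succ i ih =>
      refine mem_of_apply_mem_of_injective (Q := (Ring.jacobson S ^ (i + 1)).restrictScalars k) hF
        (fun y hy => ?_) ?_
      · exact add_mem hy (sub_mem (Ideal.mul_mem_left _ v hy) (Ideal.mul_mem_right v _ hy))
      · rw [hFx]
        exact sub_mem (Submodule.pow_succ (M := Ring.jacobson S) ▸ Ideal.mul_mem_mul ih hj)
          (Ideal.IsTwoSided.pow_succ (I := Ring.jacobson S) i ▸ Ideal.mul_mem_mul hj ih)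
  obtain ⟨n, hn⟩ := IsSemiprimaryRing.isNilpotent (R := S)
  exact (Submodule.mem_bot S).mp ((hn.trans Submodule.zero_eq_bot) ▸ hpow n)

end Radical

section Homogeneous

variable {k T : Type u} [Field k] [Ring T] [Algebra k T] {G : SquareZeroGrading k T}
  {φ : T ≃ₐ[k] T} {w : T}

namespace SquareZeroGrading

theorem degOne_mul_mul_degOne (s x t : T) : G.degOne s * x * G.degOne t = 0 := by
  have h : G.degOne s * x = G.degOne (G.degOne s * x) := by
    rw [G.degOne_mul, G.degOne_degOne, G.degOne_mul_degOne, add_zero]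
  rw [h, G.degOne_mul_degOne]

theorem degOne_mem_jacobson (G : SquareZeroGrading k T) (t : T) : G.degOne t ∈ Ring.jacobson T :=
  mem_jacobson_of_forall_isNilpotent_mul fun y => ⟨2, by
    rw [sq, mul_assoc, ← mul_assoc (G.degOne t), degOne_mul_mul_degOne, mul_zero]⟩

theorem degZero_mem_jacobson (G : SquareZeroGrading k T) {t : T} (ht : t ∈ Ring.jacobson T) :
    G.degZero t ∈ Ring.jacobson T :=
  sub_mem ht (G.degOne_mem_jacobson t)

end SquareZeroGrading

/-- `φ` is homogeneous of degree zero. -/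
def PreservesGrading (G : SquareZeroGrading k T) (φ : T ≃ₐ[k] T) : Prop :=
  ∀ t, φ (G.degOne t) = G.degOne (φ t)

namespace PreservesGrading

theorem pow (h : PreservesGrading G φ) (N : ℕ) : PreservesGrading G (φ ^ N) := by
  induction N with
  | zero => exact fun _ => rfl
  | succ N ih => exact fun t => by rw [pow_succ', AlgEquiv.mul_apply, ih, h]; rfl

theorem symm (h : PreservesGrading G φ) : PreservesGrading G φ.symm := fun t => by
  rw [AlgEquiv.symm_apply_eq, h, AlgEquiv.apply_symm_apply]

end PreservesGrading

namespace IsDegreeDefect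

theorem pow (h : IsDegreeDefect G φ w) (N : ℕ) :
    IsDegreeDefect G (φ ^ N) (∑ i ∈ Finset.range N, (φ ^ i) w) := by
  induction N with
  | zero => exact fun b => by simp
  | succ N ih =>
    intro b
    have hN := ih (φ b)
    have hb := congrArg (φ ^ N) (h b)
    simp only [map_sub, map_mul] at hb
    simp only [Finset.sum_range_succ, pow_succ, AlgEquiv.mul_apply, add_mul, mul_add]
    rw [add_sub_add_comm, hN, hb, sub_add_sub_cancel]

theorem commutator_mem_jacobson (h : IsDegreeDefect G φ w) (t : T) :
    w * t - t * w ∈ Ring.jacobson T := by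
  obtain ⟨b, rfl⟩ := φ.surjective t
  rw [h b]
  exact sub_mem (G.degOne_mem_jacobson _) (map_mem_jacobson φ (G.degOne_mem_jacobson b))

theorem apply_pow_commutator_mem_jacobson (h : IsDegreeDefect G φ w) (i : ℕ) (t : T) :
    (φ ^ i) w * t - t * (φ ^ i) w ∈ Ring.jacobson T := by
  obtain ⟨b, rfl⟩ := (φ ^ i).surjective t
  rw [← map_mul, ← map_mul, ← map_sub]
  exact map_mem_jacobson (φ ^ i) (h.commutator_mem_jacobson b)

/- The images of the `φ ^ i w` in `T / J` are central roots of the minimal polynomial of `w`, and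
there are only finitely many of those. -/
theorem exists_pow_sub_mem_jacobson [FiniteDimensional k T] (h : IsDegreeDefect G φ w) :
    ∃ N, 1 ≤ N ∧ (φ ^ N) w - w ∈ Ring.jacobson T := by
  let π : T →ₐ[k] T ⧸ Ring.jacobson T := Ideal.Quotient.mkₐ k (Ring.jacobson T)
  have hroots := finite_setOf_mem_center_aeval_eq_zero (k := k) (Ring.jacobson_quotient_jacobson T)
    (minpoly.ne_zero (IsIntegral.of_finite k w))
  obtain ⟨i, j, hij, heq⟩ := hroots.exists_lt_map_eq_of_forall_mem
    (f := fun i : ℕ => π ((φ ^ i) w)) fun i => by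
      refine ⟨Subalgebra.mem_center_iff.mpr fun s => ?_, ?_⟩
      · obtain ⟨t, rfl⟩ := Ideal.Quotient.mk_surjective s
        exact (Ideal.Quotient.eq.mpr (h.apply_pow_commutator_mem_jacobson i t)).symm
      · change Polynomial.aeval ((π.comp (φ ^ i).toAlgHom) w) _ = 0
        rw [Polynomial.aeval_algHom_apply, minpoly.aeval, map_zero]
  obtain ⟨N, rfl⟩ := Nat.exists_eq_add_of_le hij.le
  refine ⟨N, by omega, ?_⟩
  have hmem : (φ ^ i) ((φ ^ N) w - w) ∈ Ring.jacobson T := by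
    rw [map_sub, ← AlgEquiv.mul_apply, ← pow_add]
    exact Ideal.Quotient.eq.mp heq.symm
  simpa only [AlgEquiv.symm_apply_apply] using map_mem_jacobson (φ ^ i).symm hmem

/- Taking degree zero parts in the defect relation of `φ ^ M` at a degree one element makes
`degZero (φ ^ M (degOne t))` an eigenvector of the commutator with `M • degZero w`, up to the
radical; `M` is chosen so that `-1` is not an eigenvalue. -/
theorem exists_pow_degZero_apply_degOne [FiniteDimensional k T] (h : IsDegreeDefect G φ w)
    (hw : φ w - w ∈ Ring.jacobson T) :
    ∃ M, 1 ≤ M ∧ ∀ t, G.degZero ((φ ^ M) (G.degOne t)) = 0 := by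
  obtain ⟨M, hM, hinj⟩ := exists_add_natCast_smul_injective
    (LinearMap.mulLeft k (G.degZero w) - LinearMap.mulRight k (G.degZero w))
  refine ⟨M, hM, fun t => ?_⟩
  set W := ∑ i ∈ Finset.range M, (φ ^ i) w
  have hW : W - (M : k) • w ∈ Ring.jacobson T := by
    have hsum : W - (M : k) • w = ∑ i ∈ Finset.range M, ((φ ^ i) w - w) := by
      rw [Finset.sum_sub_distrib, Finset.sum_const, Finset.card_range, Nat.cast_smul_eq_nsmul]
    exact hsum ▸ sum_mem fun i _ => pow_apply_sub_mem_jacobson hw i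
  have hcomm := congrArg G.degZero (h.pow M (G.degOne t))
  rw [map_sub, map_sub, G.degZero_mul, G.degZero_mul, G.degZero_degOne, G.degOne_degOne, zero_sub]
    at hcomm
  refine eq_zero_of_commutator_add_eq_neg (k := k) (v := (M : k) • G.degZero w)
    (G.degZero_mem_jacobson hW) (fun y hy => hinj y ?_) ?_
  · rwa [smul_mul_assoc, mul_smul_comm, ← smul_sub] at hy
  · rwa [← map_smul, ← map_add, add_sub_cancel]

/- Conjugation by the unipotent element `1 - degOne w` removes the defect. -/
theorem preservesGrading_of_conj (h : IsDegreeDefect G φ w)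
    (hφ : ∀ t, G.degZero (φ (G.degOne t)) = 0) (hw : ∀ t, Commute (G.degZero w) t)
    {ψ : T ≃ₐ[k] T} (hψ : ∀ t, ψ t = (1 - G.degOne w) * φ t * (1 + G.degOne w)) :
    PreservesGrading G ψ := by
  have degOne_φ (t : T) : G.degOne (φ (G.degOne t)) = φ (G.degOne t) :=
    (sub_eq_zero.mp (hφ t)).symm
  have hψ' (t : T) : ψ t = G.degZero (φ t) + φ (G.degOne t) := by
    have hcomm : G.degOne w * φ t - φ t * G.degOne w = G.degOne (φ t) - φ (G.degOne t) := by
      have ht := h t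
      rw [← G.degZero_add_degOne w, add_mul, mul_add, (hw (φ t)).eq, add_sub_add_left_eq_sub] at ht
      exact ht
    calc ψ t = φ t - (G.degOne w * φ t - φ t * G.degOne w) - G.degOne w * φ t * G.degOne w := by
          rw [hψ]; noncomm_ring
      _ = G.degZero (φ t) + φ (G.degOne t) := by
          rw [hcomm, SquareZeroGrading.degOne_mul_mul_degOne, G.degZero_apply]; abel
  intro t
  rw [hψ', hψ', hφ, zero_add, G.degOne_degOne, map_add, G.degOne_degZero, zero_add, degOne_φ]

theorem commute_degZero (h : IsDegreeDefect G φ w) (hφ : ∀ t, G.degZero (φ (G.degOne t)) = 0)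
    (t : T) : Commute (G.degZero w) (G.degZero t) := by
  obtain ⟨b, rfl⟩ := φ.surjective t
  have hb := congrArg G.degZero (h b)
  rw [map_sub, map_sub, G.degZero_mul, G.degZero_mul, G.degZero_degOne, hφ, sub_zero] at hb
  exact sub_eq_zero.mp hb

end IsDegreeDefect

theorem IsTwistedPeriod.exists_degZero_apply_degOne_eq_zero [FiniteDimensional k T] {n : ℕ}
    (G : SquareZeroGrading k T) (h : IsTwistedPeriod n φ) :
    ∃ (m : ℕ) (ψ : T ≃ₐ[k] T), IsTwistedPeriod m ψ ∧ ∀ t, G.degZero (ψ (G.degOne t)) = 0 := by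
  obtain ⟨w, hw⟩ := h.exists_isDegreeDefect G
  obtain ⟨N, hN, hNw⟩ := hw.exists_pow_sub_mem_jacobson
  obtain ⟨M, hM, hψ⟩ := (hw.pow N).exists_pow_degZero_apply_degOne
    (apply_sum_pow_sub_mem_jacobson hNw)
  exact ⟨_, _, (h.pow hN).pow hM, hψ⟩

theorem IsTwistedPeriod.exists_conj {n : ℕ} (h : IsTwistedPeriod n φ) (u : Tˣ) :
    ∃ ψ : T ≃ₐ[k] T, IsTwistedPeriod n ψ ∧ ∀ t, ψ t = u * φ t * ↑u⁻¹ := by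
  let ψ := φ.trans (MulSemiringAction.toAlgEquiv k T (ConjAct.toConjAct u))
  have hψ (t : T) : ψ t = u * φ t * ↑u⁻¹ := ConjAct.units_smul_def _ _
  exact ⟨ψ, h.of_conj u⁻¹ fun t => by rw [hψ, mul_assoc, Units.inv_mul_cancel_left], hψ⟩

theorem IsTwistedPeriod.exists_preservesGrading [FiniteDimensional k T] {n : ℕ}
    (G : SquareZeroGrading k T)
    (hG : ∀ s, (∀ t, Commute (G.degZero s) (G.degZero t)) → ∀ t, Commute (G.degZero s) t)
    (h : IsTwistedPeriod n φ) :
    ∃ (m : ℕ) (ψ : T ≃ₐ[k] T), IsTwistedPeriod m ψ ∧ PreservesGrading G ψ := by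
  obtain ⟨m, χ, hχ, hχG⟩ := h.exists_degZero_apply_degOne_eq_zero G
  obtain ⟨w, hw⟩ := hχ.exists_isDegreeDefect G
  let u : Tˣ := {
    val := 1 - G.degOne w
    inv := 1 + G.degOne w
    val_inv := by simp [sub_mul, mul_add, G.degOne_mul_degOne]
    inv_val := by simp [add_mul, mul_sub, G.degOne_mul_degOne] }
  obtain ⟨ψ, hψ, hconj⟩ := hχ.exists_conj u
  exact ⟨m, ψ, hψ, hw.preservesGrading_of_conj hχG (hG w (hw.commute_degZero hχG)) hconj⟩

end Homogeneous

section TrivialExtension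

open TrivSqZeroExt MulOpposite

variable {k A : Type} [Field k] [Ring A] [Algebra k A]

theorem dual_smul_apply (a : A) (f : Module.Dual k A) (x : A) : (a • f) x = f (x * a) := rfl

theorem dual_op_smul_apply (b : A) (f : Module.Dual k A) (x : A) : (op b • f) x = f (b * x) := rfl

theorem fst_eq_zero_of_forall_inr_mul_eq_zero {t : TrivialExtension k A}
    (h : ∀ f : Module.Dual k A, inr f * t = 0) : t.fst = 0 := by
  refine (Module.forall_dual_apply_eq_zero_iff k t.fst).mp fun f => ?_
  have hsnd := LinearMap.congr_fun (congrArg TrivSqZeroExt.snd (h f)) 1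
  rwa [snd_mul, fst_inr, snd_inr, zero_smul, zero_add, dual_op_smul_apply, mul_one] at hsnd

variable (k A) in
/-- The grading of `T(A) = A ⊕ D(A)` with `A` in degree zero and `D(A)` in degree one. -/
noncomputable def trivialExtensionGrading : SquareZeroGrading k (TrivialExtension k A) where
  degOne := (inrHom A (Module.Dual k A)).restrictScalars k ∘ₗ
    (sndHom A (Module.Dual k A)).restrictScalars k
  degOne_degOne _ := rfl
  degOne_mul s t := TrivSqZeroExt.ext (by simp) (by simp [add_comm])
  degOne_mul_degOne s t := inr_mul_inr _ _ _
  degOne_eq_self_of_annihilated t ht :=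
    TrivSqZeroExt.ext (fst_eq_zero_of_forall_inr_mul_eq_zero fun f => ht (inr f)).symm rfl

theorem degOne_trivialExtensionGrading (t : TrivialExtension k A) :
    (trivialExtensionGrading k A).degOne t = inr t.snd := rfl

theorem degZero_trivialExtensionGrading (t : TrivialExtension k A) :
    (trivialExtensionGrading k A).degZero t = inl t.fst :=
  sub_eq_of_eq_add (inl_fst_add_inr_snd_eq t).symm

instance finiteDimensional_trivialExtension [FiniteDimensional k A] :
    FiniteDimensional k (TrivialExtension k A) :=
  inferInstanceAs (FiniteDimensional k (A × Module.Dual k A))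

theorem commute_inl_of_forall_commute {c : A} (hc : ∀ a, Commute c a) (t : TrivialExtension k A) :
    Commute (inl c) t := by
  refine TrivSqZeroExt.ext (by simp [(hc t.fst).eq]) (LinearMap.ext fun x => ?_)
  simp only [snd_mul, fst_inl, snd_inl, smul_zero, add_zero, zero_add]
  rw [dual_smul_apply, dual_op_smul_apply, (hc x).eq]

theorem commute_degZero_of_forall_commute_degZero (s : TrivialExtension k A)
    (hs : ∀ t, Commute ((trivialExtensionGrading k A).degZero s)
      ((trivialExtensionGrading k A).degZero t)) (t : TrivialExtension k A) :
    Commute ((trivialExtensionGrading k A).degZero s) t := by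
  simp only [degZero_trivialExtensionGrading] at hs ⊢
  exact commute_inl_of_forall_commute (fun a => congrArg TrivSqZeroExt.fst (hs (inl a)).eq) t

theorem exists_pow_eq_conj {S : Finset (A ≃ₐ[k] A)}
    (hS : ∀ φ : A ≃ₐ[k] A, ∃ ψ ∈ S, ∃ u : Aˣ, ∀ a, φ a = ψ (u * a * ↑u⁻¹)) (α : A ≃ₐ[k] A) :
    ∃ N, 1 ≤ N ∧ ∃ z : Aˣ, ∀ a, (α ^ N) a = z * a * ↑z⁻¹ := by
  choose ψ hψ u hu using fun i : ℕ => hS (α ^ i)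
  obtain ⟨i, j, hij, heq⟩ := S.finite_toSet.exists_lt_map_eq_of_forall_mem hψ
  obtain ⟨N, rfl⟩ := Nat.exists_eq_add_of_le hij.le
  refine ⟨N, by omega, (u i)⁻¹ * u (i + N), fun a => (α ^ i).injective ?_⟩
  rw [← AlgEquiv.mul_apply, ← pow_add, hu (i + N), ← heq, hu i]
  simp only [mul_inv_rev, inv_inv, Units.val_mul, mul_assoc, Units.mul_inv_cancel_left,
    Units.mul_inv, mul_one]

variable {φ : TrivialExtension k A ≃ₐ[k] TrivialExtension k A}

namespace PreservesGrading

theorem apply_inr (h : PreservesGrading (trivialExtensionGrading k A) φ) (f : Module.Dual k A) :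
    φ (inr f) = inr (φ (inr f)).snd := h (inr f)

theorem apply_inl (h : PreservesGrading (trivialExtensionGrading k A) φ) (a : A) :
    φ (inl a) = inl (φ (inl a)).fst := by
  have hsnd : (φ (inl a)).snd = 0 := by
    have := congrArg TrivSqZeroExt.snd (h (inl a))
    rwa [degOne_trivialExtensionGrading, degOne_trivialExtensionGrading, snd_inl, inr_zero,
      map_zero, snd_inr, snd_zero, eq_comm] at this
  exact TrivSqZeroExt.ext rfl hsnd

theorem exists_algEquiv_apply_inl (h : PreservesGrading (trivialExtensionGrading k A) φ) :
    ∃ α : A ≃ₐ[k] A, ∀ a, φ (inl a) = inl (α a) := by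
  let restrict (χ : TrivialExtension k A ≃ₐ[k] TrivialExtension k A) : A →ₐ[k] A :=
    (fstHom k A (Module.Dual k A)).comp (χ.toAlgHom.comp (inlAlgHom k A (Module.Dual k A)))
  refine ⟨AlgEquiv.ofAlgHom (restrict φ) (restrict φ.symm) ?_ ?_, h.apply_inl⟩
  · ext a
    change (φ (inl (φ.symm (inl a)).fst)).fst = a
    rw [← h.symm.apply_inl, AlgEquiv.apply_symm_apply, fst_inl]
  · ext a
    change (φ.symm (inl (φ (inl a)).fst)).fst = a
    rw [← h.apply_inl, AlgEquiv.symm_apply_apply, fst_inl]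

theorem of_conj_inl (h : PreservesGrading (trivialExtensionGrading k A) φ) {a b : A}
    {ψ : TrivialExtension k A ≃ₐ[k] TrivialExtension k A} (hψ : ∀ t, ψ t = inl a * φ t * inl b) :
    PreservesGrading (trivialExtensionGrading k A) ψ := fun t => by
  have degOne_inl (c : A) : (trivialExtensionGrading k A).degOne (inl c) = 0 := inr_zero A
  rw [hψ, hψ, h, SquareZeroGrading.degOne_mul, SquareZeroGrading.degOne_mul, degOne_inl,
    degOne_inl, zero_mul, mul_zero, zero_add, add_zero]

end PreservesGrading

theorem pow_apply_inl {α : A ≃ₐ[k] A} (h : ∀ a, φ (inl a) = inl (α a)) (N : ℕ) (a : A) :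
    (φ ^ N) (inl a) = inl ((α ^ N) a) := by
  induction N generalizing a with
  | zero => rfl
  | succ N ih => rw [pow_succ, pow_succ, AlgEquiv.mul_apply, AlgEquiv.mul_apply, h, ih]

theorem IsTwistedPeriod.exists_apply_inl_eq_self {S : Finset (A ≃ₐ[k] A)}
    (hS : ∀ φ : A ≃ₐ[k] A, ∃ ψ ∈ S, ∃ u : Aˣ, ∀ a, φ a = ψ (u * a * ↑u⁻¹)) {n : ℕ}
    (h : IsTwistedPeriod n φ) (hφ : PreservesGrading (trivialExtensionGrading k A) φ) :
    ∃ (m : ℕ) (θ : TrivialExtension k A ≃ₐ[k] TrivialExtension k A), IsTwistedPeriod m θ ∧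
      PreservesGrading (trivialExtensionGrading k A) θ ∧ ∀ a, θ (inl a) = inl a := by
  obtain ⟨α, hα⟩ := hφ.exists_algEquiv_apply_inl
  obtain ⟨N, hN, z, hz⟩ := exists_pow_eq_conj hS α
  obtain ⟨θ, hθ, hconj⟩ := (h.pow hN).exists_conj
    (Units.map (inlAlgHom k A (Module.Dual k A)).toMonoidHom z⁻¹)
  replace hconj (t : TrivialExtension k A) :
      θ t = inl (↑z⁻¹ : A) * (φ ^ N) t * inl (z : A) := hconj t
  refine ⟨_, θ, hθ, (hφ.pow N).of_conj_inl hconj, fun a => ?_⟩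
  rw [hconj, pow_apply_inl hα, hz, ← inl_mul, ← inl_mul]
  simp only [mul_assoc, Units.inv_mul_cancel_left, Units.inv_mul, mul_one]

/- `θ` restricts to a bimodule endomorphism of `D(A)`; by duality it is multiplication by the
central element `c` representing the functional `f ↦ θ f 1` on `D(A)`. -/
theorem PreservesGrading.exists_central_apply_inr [FiniteDimensional k A]
    {θ : TrivialExtension k A ≃ₐ[k] TrivialExtension k A}
    (hθ : PreservesGrading (trivialExtensionGrading k A) θ) (hA : ∀ a, θ (inl a) = inl a) :
    ∃ c : A, (∀ a, Commute c a) ∧ ∀ f, θ (inr f) = inr (c • f) := by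
  let evalOne : Module.Dual k (Module.Dual k A) :=
    LinearMap.applyₗ (1 : A) ∘ₗ (sndHom A (Module.Dual k A)).restrictScalars k ∘ₗ
      θ.toLinearMap ∘ₗ (inrHom A (Module.Dual k A)).restrictScalars k
  obtain ⟨c, hc⟩ := (Module.evalEquiv k A).surjective evalOne
  replace hc (f : Module.Dual k A) : (θ (inr f)).snd 1 = f c := (LinearMap.congr_fun hc f).symm
  have hleft (f : Module.Dual k A) (x : A) : (θ (inr f)).snd x = f (c * x) := by
    have h := hc (x • f)
    rwa [← inl_mul_inr, map_mul, hA, hθ.apply_inr f, inl_mul_inr, snd_inr, dual_smul_apply,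
      dual_smul_apply, one_mul] at h
  have hright (f : Module.Dual k A) (x : A) : (θ (inr f)).snd x = f (x * c) := by
    have h := hc (op x • f)
    rwa [← inr_mul_inl, map_mul, hA, hθ.apply_inr f, inr_mul_inl, snd_inr, dual_op_smul_apply,
      dual_op_smul_apply, mul_one] at h
  refine ⟨c, fun x => ?_, fun f => ?_⟩
  · refine sub_eq_zero.mp ((Module.forall_dual_apply_eq_zero_iff k _).mp fun f => ?_)
    rw [map_sub, ← hleft, ← hright, sub_self]
  · rw [hθ.apply_inr f]
    exact congrArg inr (LinearMap.ext (hright f))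

theorem pow_apply_eq_inl_add_inr {c : A} (hA : ∀ a, φ (inl a) = inl a)
    (hc : ∀ f, φ (inr f) = inr (c • f)) (N : ℕ) (t : TrivialExtension k A) :
    (φ ^ N) t = inl t.fst + inr (c ^ N • t.snd) := by
  induction N with
  | zero => rw [pow_zero, pow_zero, one_smul, inl_fst_add_inr_snd_eq, AlgEquiv.one_apply]
  | succ N ih => rw [pow_succ', AlgEquiv.mul_apply, ih, map_add, hA, hc, smul_smul, pow_succ']

theorem IsTwistedPeriod.pow_eq_one [FiniteDimensional k A] {n : ℕ} (h : IsTwistedPeriod n φ)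
    (hφ : PreservesGrading (trivialExtensionGrading k A) φ) (hA : ∀ a, φ (inl a) = inl a) :
    φ ^ (2 * n.factorial) = 1 := by
  have hA' (a : A) : φ.symm (inl a) = inl a := by rw [AlgEquiv.symm_apply_eq, hA]
  obtain ⟨c, hc, hcf⟩ := hφ.symm.exists_central_apply_inr hA'
  have hφc (t : TrivialExtension k A) : φ.symm t = (trivialExtensionGrading k A).degZero t +
      inl c * (trivialExtensionGrading k A).degOne t := by
    rw [degZero_trivialExtensionGrading, degOne_trivialExtensionGrading, inl_mul_inr, ← hcf,
      ← hA' t.fst, ← map_add, inl_fst_add_inr_snd_eq]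
  have hunit := h.pow_smul_unit _ (commute_inl_of_forall_commute hc) hφc
  have hcpow : c ^ (2 * n.factorial) = 1 := by
    have hzero : ((inl c : TrivialExtension k A) ^ (2 * n.factorial) - 1) •
        (trivialExtensionGrading k A).unit = 0 := by
      rw [sub_smul, hunit, one_smul, sub_self]
    have hfst := congrArg TrivSqZeroExt.fst
      ((trivialExtensionGrading k A).smul_unit_eq_zero_iff.mp hzero)
    rw [degOne_trivialExtensionGrading, fst_inr, fst_sub, fst_pow, fst_inl, fst_one] at hfst
    exact sub_eq_zero.mp hfst.symm
  have hsymm : φ⁻¹ ^ (2 * n.factorial) = 1 := by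
    ext1 t
    exact (pow_apply_eq_inl_add_inr hA' hcf _ t).trans <| by
      rw [hcpow, one_smul, inl_fst_add_inr_snd_eq, AlgEquiv.one_apply]
  rwa [inv_pow, inv_eq_one] at hsymm

end TrivialExtension

end PeriodicAlgebra

section DualBimodule

variable (k A : Type) [Field k] [Ring A] [Algebra k A]

open PeriodicAlgebra in
theorem trivialExtension_periodic_iff_twistedPeriodic_of_finite_out_general
    [FiniteDimensional k A]
    (hOut : ∃ S : Finset (A ≃ₐ[k] A), ∀ φ : A ≃ₐ[k] A, ∃ ψ ∈ S, ∃ u : Aˣ,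
      ∀ a : A, φ a = ψ ((u : A) * a * ((u⁻¹ : Aˣ) : A))) :
    IsPeriodicAlgebra k (TrivialExtension k A) ↔
      IsTwistedPeriodicAlgebra k (TrivialExtension k A) := by
  rw [isPeriodicAlgebra_iff_exists_isTwistedPeriod_one,
    isTwistedPeriodicAlgebra_iff_exists_isTwistedPeriod]
  refine ⟨fun ⟨n, h⟩ => ⟨n, 1, h⟩, fun ⟨n, φ, h⟩ => ?_⟩
  obtain ⟨S, hS⟩ := hOut
  obtain ⟨n, φ, h, hgraded⟩ := h.exists_preservesGrading (trivialExtensionGrading k A)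
    commute_degZero_of_forall_commute_degZero
  obtain ⟨n, φ, h, hgraded, hA⟩ := h.exists_apply_inl_eq_self hS hgraded
  have hpos : 1 ≤ 2 * n.factorial := Nat.mul_pos two_pos n.factorial_pos
  exact ⟨_, h.pow_eq_one hgraded hA ▸ h.pow hpos⟩

/-- Let `A` be a finite-dimensional `k`-algebra such that `A/rad A` is a
separable `k`-algebra. If the outer automorphism group `Out(A) = Aut_k(A)/Inn(A)` is finite
(i.e. finitely many automorphisms cover all of `Aut_k(A)` up to inner automorphisms), then
the trivial extension algebra `T(A)` is periodic if and only if it is twisted periodic. -/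
theorem trivialExtension_periodic_iff_twistedPeriodic_of_finite_out
    [FiniteDimensional k A]
    (hsep : ∀ (S : Type) [Ring S] [Algebra k S] (π : A →ₐ[k] S),
      Function.Surjective π → RingHom.ker π = Ideal.jacobson (⊥ : Ideal A) →
      ∀ (K : Type) [Field K] [Algebra k K], IsSemisimpleRing (K ⊗[k] S))
    (hOut : ∃ S : Finset (A ≃ₐ[k] A), ∀ φ : A ≃ₐ[k] A, ∃ ψ ∈ S, ∃ u : Aˣ,
      ∀ a : A, φ a = ψ ((u : A) * a * ((u⁻¹ : Aˣ) : A))) :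
    IsPeriodicAlgebra k (TrivialExtension k A) ↔
      IsTwistedPeriodicAlgebra k (TrivialExtension k A) :=
  trivialExtension_periodic_iff_twistedPeriodic_of_finite_out_general k A hOut

end DualBimodule
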